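/- arXiv:0911.1019 — 2 statements merged into one kernel-verified Lean document; each statement's English description precedes it below -/
import Mathlib

section
/- Let n ≥ 1 be a natural number and set β̃_{1,n} = (2π(2n−1)(2n+1)/T) · cot((2n−1)π/(2(2n+1))). Then for every ε > 0 there exists a ∈ Λ̃_n such that ∫_0^T |a(x) − λ̃_{2n−1}| dx < β̃_{1,n} + ε. Consequently inf_{a ∈ Λ̃_n} ‖a − λ̃_{2n−1}‖_{L¹(0,T)} = β̃_{1,n}. -/
open MeasureTheory Set Real

/-- `u` is a solution of `u'' + a·u = 0` on `[c,d]`, with derivative function `v`. -/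
def IsSolOn (a u v : ℝ → ℝ) (c d : ℝ) : Prop :=
  (∀ x ∈ Set.Icc c d, HasDerivWithinAt u (v x) (Set.Icc c d) x) ∧
  (∀ x ∈ Set.Icc c d, v x = v c - ∫ t in c..x, a t * u t)

/-- Membership in `L_T`: measurable, `T`-periodic and integrable on `[0,T]`. -/
def MemLT (T : ℝ) (a : ℝ → ℝ) : Prop :=
  Measurable a ∧ (∀ x, a (x + T) = a x) ∧ IntegrableOn a (Set.Icc 0 T)

/-- `c ≺ d` : `c ≤ d` a.e. on `[0,T]` and `c < d` on a set of positive measure. -/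
def Prec (T : ℝ) (c d : ℝ → ℝ) : Prop :=
  (∀ᵐ x ∂(volume.restrict (Set.Icc 0 T)), c x ≤ d x) ∧
  0 < volume {x ∈ Set.Icc 0 T | c x < d x}

/-- `(u,v)` solves the periodic problem `u'' + a u = 0`, `u(0)=u(T)`, `u'(0)=u'(T)`. -/
def PeriodicSol (T : ℝ) (a u v : ℝ → ℝ) : Prop :=
  IsSolOn a u v 0 T ∧ u 0 = u T ∧ v 0 = v T

/-- `(u,v)` solves the antiperiodic problem `u'' + a u = 0`, `u(0)+u(T)=0`, `u'(0)+u'(T)=0`. -/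
def AntiperiodicSol (T : ℝ) (a u v : ℝ → ℝ) : Prop :=
  IsSolOn a u v 0 T ∧ u 0 + u T = 0 ∧ v 0 + v T = 0

/-- The `(2n-1)`-st periodic eigenvalue `λ_{2n-1} = 4 n² π² / T²`. -/
noncomputable def lam (T : ℝ) (n : ℕ) : ℝ := 4 * (n : ℝ) ^ 2 * Real.pi ^ 2 / T ^ 2

/-- The `(2n-1)`-st antiperiodic eigenvalue `λ̃_{2n-1} = (2n-1)² π² / T²`. -/
noncomputable def lamT (T : ℝ) (n : ℕ) : ℝ := (2 * (n : ℝ) - 1) ^ 2 * Real.pi ^ 2 / T ^ 2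

/-- The set `Λ_n`. -/
def LambdaN (T : ℝ) (n : ℕ) : Set (ℝ → ℝ) :=
  {a | MemLT T a ∧ Prec T (fun _ => lam T n) a ∧
    ∃ u v : ℝ → ℝ, PeriodicSol T a u v ∧ ∃ x ∈ Set.Icc 0 T, u x ≠ 0}

/-- The set `Λ̃_n`. -/
def LambdaTildeN (T : ℝ) (n : ℕ) : Set (ℝ → ℝ) :=
  {a | MemLT T a ∧ Prec T (fun _ => lamT T n) a ∧
    ∃ u v : ℝ → ℝ, AntiperiodicSol T a u v ∧ ∃ x ∈ Set.Icc 0 T, u x ≠ 0}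

/-- The constant `β_{1,n}` of the periodic `L¹` Lyapunov inequality. -/
noncomputable def beta1 (T : ℝ) (n : ℕ) : ℝ :=
  8 * Real.pi * (n : ℝ) * ((n : ℝ) + 1) / T * Real.cot ((n : ℝ) * Real.pi / (2 * ((n : ℝ) + 1)))

/-- The constant `β̃_{1,n}` of the antiperiodic `L¹` Lyapunov inequality. -/
noncomputable def betaT1 (T : ℝ) (n : ℕ) : ℝ :=
  2 * Real.pi * (2 * (n : ℝ) - 1) * (2 * (n : ℝ) + 1) / T *
    Real.cot ((2 * (n : ℝ) - 1) * Real.pi / (2 * (2 * (n : ℝ) + 1)))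

open Filter Topology

/-- absolutely continuous on the interval with prescribed a.e. derivative. -/
def ACD (T : ℝ) (f f' : ℝ → ℝ) : Prop :=
  AbsolutelyContinuousOnInterval f 0 T ∧ ∀ᵐ x, x ∈ Set.Icc 0 T → HasDerivAt f (f' x) x

lemma ACD.congr {T : ℝ} (hT : 0 < T) {f g f' : ℝ → ℝ} (h : ACD T f f')
    (hfg : ∀ x ∈ Set.Icc 0 T, g x = f x) : ACD T g f' := by
  refine ⟨?_, ?_⟩
  · have h1 := h.1
    rw [absolutelyContinuousOnInterval_iff] at h1 ⊢
    intro ε hε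
    obtain ⟨δ, hδ, H⟩ := h1 ε hε
    refine ⟨δ, hδ, fun E hE hs => ?_⟩
    have := H E hE hs
    convert this using 1
    apply Finset.sum_congr rfl
    intro i hi
    have := hE.1 i hi
    rw [uIcc_of_le hT.le] at this
    rw [hfg _ this.1, hfg _ this.2]
  · have h1 : ∀ᵐ x : ℝ, x ≠ 0 := by simp [ae_iff, measure_singleton]
    have h2 : ∀ᵐ x : ℝ, x ≠ T := by simp [ae_iff, measure_singleton]
    filter_upwards [h.2, h1, h2] with x hx h0 hT' hI
    refine (hx hI).congr_of_eventuallyEq ?_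
    have : Set.Icc 0 T ∈ 𝓝 x := Icc_mem_nhds (lt_of_le_of_ne hI.1 (Ne.symm h0))
      (lt_of_le_of_ne hI.2 hT')
    filter_upwards [this] with y hy using hfg y hy

lemma ACD.congr' {T : ℝ} {f f' g' : ℝ → ℝ} (h : ACD T f f')
    (hfg : ∀ᵐ x, x ∈ Set.Icc 0 T → f' x = g' x) : ACD T f g' := by
  refine ⟨h.1, ?_⟩
  filter_upwards [h.2, hfg] with x h1 h2 hx
  rw [← h2 hx]; exact h1 hx

lemma ACD.add {T : ℝ} {f f' g g' : ℝ → ℝ} (hf : ACD T f f') (hg : ACD T g g') :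
    ACD T (fun x => f x + g x) (fun x => f' x + g' x) := by
  refine ⟨hf.1.fun_add hg.1, ?_⟩
  filter_upwards [hf.2, hg.2] with x h1 h2 hx using (h1 hx).add (h2 hx)

lemma ACD.sub {T : ℝ} {f f' g g' : ℝ → ℝ} (hf : ACD T f f') (hg : ACD T g g') :
    ACD T (fun x => f x - g x) (fun x => f' x - g' x) := by
  refine ⟨hf.1.fun_sub hg.1, ?_⟩
  filter_upwards [hf.2, hg.2] with x h1 h2 hx using (h1 hx).sub (h2 hx)

lemma ACD.mul {T : ℝ} {f f' g g' : ℝ → ℝ} (hf : ACD T f f') (hg : ACD T g g') :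
    ACD T (fun x => f x * g x) (fun x => f' x * g x + f x * g' x) := by
  refine ⟨hf.1.fun_mul hg.1, ?_⟩
  filter_upwards [hf.2, hg.2] with x h1 h2 hx using (h1 hx).mul (h2 hx)

lemma ACD.const_mul {T : ℝ} {f f' : ℝ → ℝ} (c : ℝ) (hf : ACD T f f')  :
    ACD T (fun x => c * f x) (fun x => c * f' x) := by
  refine ⟨hf.1.const_mul c, ?_⟩
  filter_upwards [hf.2] with x h1 hx using (h1 hx).const_mul c

lemma ACD.comp {T : ℝ} (hT : 0 < T) {f f' φ φ' : ℝ → ℝ} (hf : ACD T f f')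
    (hφ : ∀ y, HasDerivAt φ (φ' y) y) (hc : Continuous φ') :
    ACD T (fun x => φ (f x)) (fun x => φ' (f x) * f' x) := by
  refine ⟨?_, ?_⟩
  · have hd : ContDiff ℝ 1 φ := by
      rw [contDiff_one_iff_deriv]
      refine ⟨fun y => (hφ y).differentiableAt, ?_⟩
      have : deriv φ = φ' := funext fun y => (hφ y).deriv
      rw [this]; exact hc
    obtain ⟨K, hK⟩ := (hd.locallyLipschitz.locallyLipschitzOn
      (s := f '' uIcc 0 T)).exists_lipschitzOnWith_of_compact
      (isCompact_uIcc.image_of_continuousOn hf.1.continuousOn)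
    have h1 := hf.1
    rw [absolutelyContinuousOnInterval_iff] at h1 ⊢
    intro ε hε
    obtain ⟨δ, hδ, H⟩ := h1 (ε / (K + 1)) (by positivity)
    refine ⟨δ, hδ, fun E hE hs => ?_⟩
    have h2 := H E hE hs
    have h3 : ∑ i ∈ Finset.range E.1, dist (φ (f (E.2 i).1)) (φ (f (E.2 i).2)) ≤
        ∑ i ∈ Finset.range E.1, (K + 1 : ℝ) * dist (f (E.2 i).1) (f (E.2 i).2) := by
      apply Finset.sum_le_sum
      intro i hi
      have h4 := hE.1 i hi
      have h5 := hK.dist_le_mul _ (mem_image_of_mem f h4.1) _ (mem_image_of_mem f h4.2)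
      have : (0:ℝ) ≤ dist (f (E.2 i).1) (f (E.2 i).2) := dist_nonneg
      nlinarith
    rw [← Finset.mul_sum] at h3
    have hKp : (0:ℝ) < K + 1 := by positivity
    rw [lt_div_iff₀ hKp] at h2
    linarith
  · filter_upwards [hf.2] with x h1 hx using (hφ (f x)).comp x (h1 hx)

lemma ACD.integral {T : ℝ} (hT : 0 < T) {f : ℝ → ℝ} (c : ℝ) (hf : IntervalIntegrable f volume 0 T) :
    ACD T (fun x => c + ∫ t in (0:ℝ)..x, f t) f := by
  refine ⟨?_, ?_⟩
  · have h1 := hf.absolutelyContinuousOnInterval_intervalIntegral (c := 0) (by simp)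
    have h2 : AbsolutelyContinuousOnInterval (fun _ : ℝ => c) 0 T :=
      (LipschitzWith.const c).lipschitzOnWith.absolutelyContinuousOnInterval
    exact h2.fun_add h1
  · filter_upwards [hf.ae_hasDerivAt_integral] with x hx hI
    rw [uIcc_of_le hT.le] at hx
    exact (hx hI 0 ⟨le_rfl, hT.le⟩).const_add c

lemma ACD.const_of_zero {T : ℝ} (hT : 0 < T) {f f' : ℝ → ℝ} (hf : ACD T f f')
    (h0 : ∀ᵐ x, x ∈ Set.Icc 0 T → f' x = 0) : ∀ x ∈ Set.Icc 0 T, f x = f 0 := by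
  obtain ⟨C, hC⟩ := hf.1.const_of_ae_hasDerivAt_zero (by
    rw [uIcc_of_le hT.le]
    filter_upwards [hf.2, h0] with x h1 h2 hx
    rw [← h2 hx]; exact h1 hx)
  rw [uIcc_of_le hT.le] at hC
  intro x hx
  rw [hC x hx, hC 0 ⟨le_rfl, hT.le⟩]

lemma ACD.sub_le {T : ℝ} (hT : 0 < T) {f f' g : ℝ → ℝ} (hf : ACD T f f')
    (hg : IntervalIntegrable g volume 0 T)
    (h : ∀ᵐ x, x ∈ Set.Icc 0 T → f' x ≤ g x) : f T - f 0 ≤ ∫ x in (0:ℝ)..T, g x := by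
  rw [← hf.1.integral_deriv_eq_sub]
  apply intervalIntegral.integral_mono_ae_restrict hT.le hf.1.intervalIntegrable_deriv hg
  rw [EventuallyLE, ae_restrict_iff' measurableSet_Icc]
  filter_upwards [hf.2, h] with x h1 h2 hx
  rw [(h1 hx).deriv]; exact h2 hx

lemma sol_ACD {T : ℝ} (hT : 0 < T) {a u v : ℝ → ℝ} (ha : IntegrableOn a (Set.Icc 0 T))
    (h : IsSolOn a u v 0 T) :
    ACD T u v ∧ ACD T v (fun x => -(a x * u x)) := by
  have hu : ContinuousOn u (Set.Icc 0 T) := fun x hx => (h.1 x hx).continuousWithinAt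
  have hau : IntervalIntegrable (fun x => -(a x * u x)) volume 0 T := by
    rw [intervalIntegrable_iff_integrableOn_Icc_of_le hT.le]
    exact (ha.mul_continuousOn hu isCompact_Icc).neg
  have hv : ACD T v (fun x => -(a x * u x)) := by
    refine (ACD.integral hT (v 0) hau).congr hT ?_
    intro x hx
    rw [h.2 x hx, intervalIntegral.integral_neg]; ring
  refine ⟨?_, hv⟩
  have hvc : ContinuousOn v (Set.Icc 0 T) := by
    have := hv.1.continuousOn
    rwa [uIcc_of_le hT.le] at this
  have hvi : IntervalIntegrable v volume 0 T := by
    apply ContinuousOn.intervalIntegrable; rwa [uIcc_of_le hT.le]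
  refine (ACD.integral hT (u 0) hvi).congr hT ?_
  intro x hx
  have := intervalIntegral.integral_eq_sub_of_hasDerivAt_of_le hx.1 (f := u) (f' := v)
    (hu.mono (Icc_subset_Icc_right hx.2))
    (fun y hy => (h.1 y ⟨hy.1.le, hy.2.le.trans hx.2⟩).hasDerivAt
      (Icc_mem_nhds hy.1 (hy.2.trans_le hx.2)))
    (by apply ContinuousOn.intervalIntegrable; rw [uIcc_of_le hx.1]
        exact hvc.mono (Icc_subset_Icc_right hx.2))
  rw [this]; ring

lemma prufer {T ω : ℝ} (hT : 0 < T) (hω : 0 < ω) {b u v : ℝ → ℝ}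
    (hb : IntegrableOn b (Set.Icc 0 T))
    (hb0 : ∀ᵐ x, x ∈ Set.Icc 0 T → 0 ≤ b x)
    (hbp : 0 < volume {x ∈ Set.Icc 0 T | 0 < b x})
    (hud : ∀ x ∈ Set.Icc 0 T, HasDerivWithinAt u (v x) (Set.Icc 0 T) x)
    (hu : ACD T u v) (hv : ACD T v (fun x => -((ω ^ 2 + b x) * u x)))
    (hne : ∃ x ∈ Set.Icc 0 T, u x ≠ 0) (hu0 : u 0 + u T = 0) (hv0 : v 0 + v T = 0) :
    ∃ θ : ℝ → ℝ, ∃ k : ℤ, Odd k ∧ θ T = θ 0 + k * π ∧ ω * T < k * π ∧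
      ACD T θ (fun x => ω + b x * (Real.sin (θ x)) ^ 2 / ω) := by
  have hcu : ContinuousOn u (Set.Icc 0 T) := by
    have := hu.1.continuousOn
    rwa [uIcc_of_le hT.le] at this
  have hcv : ContinuousOn v (Set.Icc 0 T) := by
    have := hv.1.continuousOn
    rwa [uIcc_of_le hT.le] at this
  set E : ℝ → ℝ := fun x => v x ^ 2 + ω ^ 2 * u x ^ 2 with hE
  have hEnn : ∀ x, 0 ≤ E x := fun x => by positivity
  have mu : AEMeasurable u (volume.restrict (Set.Icc 0 T)) := hcu.aemeasurable measurableSet_Icc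
  have mv : AEMeasurable v (volume.restrict (Set.Icc 0 T)) := hcv.aemeasurable measurableSet_Icc
  have mE : AEMeasurable E (volume.restrict (Set.Icc 0 T)) :=
    (mv.pow_const 2).add ((mu.pow_const 2).const_mul _)
  have hr : IntervalIntegrable (fun x => b x * (-(u x * v x) / E x)) volume 0 T := by
    rw [intervalIntegrable_iff_integrableOn_Icc_of_le hT.le]
    refine Integrable.mul_bdd (c := 1 / ω) hb ((mu.mul mv).neg.div mE).aestronglyMeasurable ?_
    refine Eventually.of_forall fun x => ?_
    rw [norm_div, Real.norm_eq_abs, Real.norm_eq_abs, abs_of_nonneg (hEnn x)]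
    refine div_le_of_le_mul₀ (hEnn x) (by positivity) ?_
    rw [div_mul_eq_mul_div, le_div_iff₀ hω, abs_neg, abs_mul, one_mul]
    have : E x = |v x| ^ 2 + ω ^ 2 * |u x| ^ 2 := by simp [hE]
    rw [this]
    nlinarith [sq_nonneg (|v x| - ω * |u x|), abs_nonneg (u x), abs_nonneg (v x),
      mul_nonneg hω.le (mul_nonneg (abs_nonneg (u x)) (abs_nonneg (v x)))]
  have hq' : IntervalIntegrable (fun x => b x * (ω * u x ^ 2 / E x)) volume 0 T := by
    rw [intervalIntegrable_iff_integrableOn_Icc_of_le hT.le]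
    refine Integrable.mul_bdd (c := 1 / ω) hb
      (((mu.pow_const 2).const_mul _).div mE).aestronglyMeasurable ?_
    refine Eventually.of_forall fun x => ?_
    rw [Real.norm_of_nonneg (div_nonneg (by positivity) (hEnn x))]
    refine div_le_of_le_mul₀ (hEnn x) (by positivity) ?_
    rw [div_mul_eq_mul_div, le_div_iff₀ hω]
    simp only [hE]
    nlinarith [sq_nonneg (v x)]
  have hq : IntervalIntegrable (fun x => ω + b x * (ω * u x ^ 2 / E x)) volume 0 T :=
    intervalIntegrable_const.add hq'
  obtain ⟨r, θ0, hr0, hrc, hrs⟩ : ∃ r θ0 : ℝ, 0 ≤ r ∧ r * Real.cos θ0 = v 0 ∧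
      r * Real.sin θ0 = ω * u 0 := by
    refine ⟨‖(⟨v 0, ω * u 0⟩ : ℂ)‖, Complex.arg ⟨v 0, ω * u 0⟩, norm_nonneg _, ?_, ?_⟩
    · exact Complex.norm_mul_cos_arg _
    · exact Complex.norm_mul_sin_arg _
  set θ : ℝ → ℝ := fun x => θ0 + ∫ t in (0:ℝ)..x, (ω + b t * (ω * u t ^ 2 / E t)) with hθ
  set S : ℝ → ℝ := fun x => 0 + ∫ t in (0:ℝ)..x, b t * (-(u t * v t) / E t) with hS
  have hθd := ACD.integral hT θ0 hq
  have hSd := ACD.integral hT 0 hr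
  change ACD T θ _ at hθd
  change ACD T S _ at hSd
  have hθ0 : θ 0 = θ0 := by simp [hθ]
  have hS0 : S 0 = 0 := by simp [hS]
  have hcos := hθd.comp hT (φ := Real.cos) (φ' := fun y => -Real.sin y)
    (fun y => Real.hasDerivAt_cos y) (by fun_prop)
  have hsin := hθd.comp hT (φ := Real.sin) (φ' := fun y => Real.cos y)
    (fun y => Real.hasDerivAt_sin y) (by fun_prop)
  have hexp := hSd.comp hT (φ := fun y => Real.exp (-y)) (φ' := fun y => - Real.exp (-y))
    (fun y => by simpa using (hasDerivAt_neg y).exp) (by fun_prop)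
  have hP := ((hv.mul hcos).add ((hu.const_mul ω).mul hsin)).mul hexp
  have hQ := (((hu.const_mul ω).mul hcos).sub (hv.mul hsin)).mul hexp
  have hEz : ∀ x, E x = 0 → u x = 0 ∧ v x = 0 := by
    intro x hx
    have h1 : 0 ≤ v x ^ 2 := sq_nonneg _
    have h2 : 0 ≤ ω ^ 2 * u x ^ 2 := by positivity
    have h3 : v x ^ 2 + ω ^ 2 * u x ^ 2 = 0 := hx
    have h4 : ω ^ 2 * u x ^ 2 = 0 := by linarith
    have h5 : v x ^ 2 = 0 := by linarith
    refine ⟨?_, by simpa using h5⟩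
    simpa [hω.ne'] using h4
  have hPc := hP.const_of_zero hT (by
    refine Eventually.of_forall fun x hx => ?_
    by_cases h : E x = 0
    · obtain ⟨h1, h2⟩ := hEz x h
      simp [h1, h2]
    · have h' : v x ^ 2 + ω ^ 2 * u x ^ 2 ≠ 0 := h
      simp only [hE]
      field_simp
      ring)
  have hQc := hQ.const_of_zero hT (by
    refine Eventually.of_forall fun x hx => ?_
    by_cases h : E x = 0
    · obtain ⟨h1, h2⟩ := hEz x h
      simp [h1, h2]
    · have h' : v x ^ 2 + ω ^ 2 * u x ^ 2 ≠ 0 := h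
      simp only [hE]
      field_simp
      ring)
  have hP2 : ∀ x ∈ Set.Icc 0 T, v x * Real.cos (θ x) + ω * u x * Real.sin (θ x)
      = r * Real.exp (S x) := by
    intro x hx
    have h1 := hPc x hx
    rw [hS0, hθ0, ← hrc, ← hrs] at h1
    have h2 : Real.exp (-S x) * Real.exp (S x) = 1 := by rw [← Real.exp_add]; simp
    have h3 : (r * Real.cos θ0 * Real.cos θ0 + r * Real.sin θ0 * Real.sin θ0) * Real.exp (-0) = r := by
      simp only [neg_zero, Real.exp_zero]
      linear_combination r * Real.sin_sq_add_cos_sq θ0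
    rw [h3] at h1
    linear_combination Real.exp (S x) * h1 - (v x * Real.cos (θ x) + ω * u x * Real.sin (θ x)) * h2
  have hQ2 : ∀ x ∈ Set.Icc 0 T, ω * u x * Real.cos (θ x) - v x * Real.sin (θ x) = 0 := by
    intro x hx
    have h1 := hQc x hx
    rw [hS0, hθ0, ← hrc, ← hrs] at h1
    have h2 : Real.exp (-S x) ≠ 0 := (Real.exp_pos _).ne'
    have h3 : (r * Real.sin θ0 * Real.cos θ0 - r * Real.cos θ0 * Real.sin θ0) * Real.exp (-0) = 0 := by
      ring
    rw [h3] at h1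
    exact (mul_eq_zero.mp h1).resolve_right h2
  have hus : ∀ x ∈ Set.Icc 0 T, ω * u x = r * Real.exp (S x) * Real.sin (θ x) := by
    intro x hx
    linear_combination Real.sin (θ x) * hP2 x hx + Real.cos (θ x) * hQ2 x hx
      - ω * u x * Real.sin_sq_add_cos_sq (θ x)
  have hvs : ∀ x ∈ Set.Icc 0 T, v x = r * Real.exp (S x) * Real.cos (θ x) := by
    intro x hx
    linear_combination Real.cos (θ x) * hP2 x hx - Real.sin (θ x) * hQ2 x hx
      - v x * Real.sin_sq_add_cos_sq (θ x)
  have hrp : 0 < r := by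
    rcases hr0.lt_or_eq with h | h
    · exact h
    · exfalso
      obtain ⟨x, hx, hx'⟩ := hne
      have := hus x hx
      rw [← h] at this
      simp [hω.ne', hx'] at this
  have hEe : ∀ x ∈ Set.Icc 0 T, E x = (r * Real.exp (S x)) ^ 2 := by
    intro x hx
    have h1 : E x = v x ^ 2 + (ω * u x) ^ 2 := by simp only [hE]; ring
    rw [h1, hus x hx, hvs x hx]
    linear_combination (r * Real.exp (S x)) ^ 2 * Real.sin_sq_add_cos_sq (θ x)
  have hEp : ∀ x ∈ Set.Icc 0 T, 0 < E x := by
    intro x hx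
    rw [hEe x hx]
    have := Real.exp_pos (S x)
    positivity
  have h0m : (0:ℝ) ∈ Set.Icc 0 T := ⟨le_rfl, hT.le⟩
  have hTm : T ∈ Set.Icc 0 T := ⟨hT.le, le_rfl⟩
  have hTe := Real.exp_pos (S T)
  have hsinD : Real.sin (θ T - θ 0) = 0 := by
    rw [Real.sin_sub, hθ0]
    have h1 := hus T hTm
    have h2 := hvs T hTm
    have h3 : r * Real.exp (S T) * r * (Real.sin (θ T) * Real.cos θ0 - Real.cos (θ T) * Real.sin θ0) = 0 := by
      have h5 : ω * u T = - (r * Real.sin θ0) := by linear_combination ω * hu0 + hrs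
      have h6 : v T = - (r * Real.cos θ0) := by linear_combination hv0 + hrc
      rw [h5] at h1
      rw [h6] at h2
      linear_combination -r * Real.cos θ0 * h1 + r * Real.sin θ0 * h2
    have h4 : r * Real.exp (S T) * r ≠ 0 := by positivity
    exact (mul_eq_zero.mp h3).resolve_left h4
  have hcosD : Real.cos (θ T - θ 0) < 0 := by
    rw [Real.cos_sub, hθ0]
    have h1 := hus T hTm
    have h2 := hvs T hTm
    have h3 : Real.exp (S T) * (Real.cos (θ T) * Real.cos θ0 + Real.sin (θ T) * Real.sin θ0) = -1 := by
      have h4 : r ^ 2 * (Real.exp (S T) * (Real.cos (θ T) * Real.cos θ0 + Real.sin (θ T) * Real.sin θ0))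
          = r ^ 2 * (-1) := by
        have h5 : ω * u T = - (r * Real.sin θ0) := by linear_combination ω * hu0 + hrs
        have h6 : v T = - (r * Real.cos θ0) := by linear_combination hv0 + hrc
        rw [h5] at h1
        rw [h6] at h2
        linear_combination -r * Real.cos θ0 * h2 - r * Real.sin θ0 * h1
          - r ^ 2 * Real.sin_sq_add_cos_sq θ0
      exact mul_left_cancel₀ (by positivity) h4
    by_contra hcon
    have := mul_nonneg hTe.le (not_lt.mp hcon)
    linarith
  obtain ⟨k, hk⟩ := Real.sin_eq_zero_iff.mp hsinD
  have hkodd : Odd k := by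
    rw [← hk, Real.cos_int_mul_pi] at hcosD
    by_contra hcon
    rw [Int.not_odd_iff_even] at hcon
    rw [hcon.neg_one_zpow] at hcosD
    linarith
  refine ⟨θ, k, hkodd, by linarith, ?_, ?_⟩
  · -- strict inequality
    rw [hk, hθ0]
    have h1 : θ T - θ0 = ω * T + ∫ x in (0:ℝ)..T, b x * (ω * u x ^ 2 / E x) := by
      simp only [hθ]
      rw [intervalIntegral.integral_add intervalIntegrable_const hq']
      simp
      ring
    rw [h1]
    have h2 : 0 < ∫ x in (0:ℝ)..T, b x * (ω * u x ^ 2 / E x) := by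
      have hZ : ({x ∈ Set.Icc 0 T | u x = 0}).Countable := by
        have hd : IsDiscrete {x ∈ Set.Icc 0 T | u x = 0} := by
          apply IsDiscrete.of_nhdsWithin
          rintro x ⟨hx, hx0⟩
          have hvx : v x ≠ 0 := by
            intro h
            have := hEp x hx
            simp [hE, hx0, h] at this
          have h3 := (hud x hx).eventually_ne (c := (0:ℝ)) hvx
          rw [le_pure_iff, mem_nhdsWithin_iff_eventually]
          rw [eventually_nhdsWithin_iff] at h3
          filter_upwards [h3] with y hy hyZ
          by_contra hcon
          exact hy ⟨hyZ.1, hcon⟩ hyZ.2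
        exact (HereditarilyLindelofSpace.isLindelof _).countable_of_isDiscrete hd
      rw [intervalIntegral.integral_of_le hT.le, ← integral_Icc_eq_integral_Ioc]
      rw [setIntegral_pos_iff_support_of_nonneg_ae]
      · refine lt_of_lt_of_le hbp ?_
        have h4 : {x ∈ Set.Icc 0 T | 0 < b x} ⊆
            ((Function.support fun x => b x * (ω * u x ^ 2 / E x)) ∩ Set.Icc 0 T) ∪
            {x ∈ Set.Icc 0 T | u x = 0} := by
          rintro x ⟨hx, hbx⟩
          by_cases h : u x = 0
          · right; exact ⟨hx, h⟩
          · left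
            refine ⟨?_, hx⟩
            have := hEp x hx
            have h5 : 0 < u x ^ 2 := by positivity
            simp only [Function.mem_support]
            positivity
        refine (measure_mono h4).trans ((measure_union_le _ _).trans ?_)
        rw [hZ.measure_zero, add_zero]
      · rw [EventuallyLE, ae_restrict_iff' measurableSet_Icc]
        filter_upwards [hb0] with x h3 hx
        have := hEp x hx
        have := h3 hx
        simp only [Pi.zero_apply]
        positivity
      · exact (intervalIntegrable_iff_integrableOn_Icc_of_le hT.le).mp hq'
    linarith
  · refine hθd.congr' (Eventually.of_forall fun x hx => ?_)
    have h1 := hEp x hx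
    have h2 := hus x hx
    have h3 := hEe x hx
    have h4 : (ω * u x) ^ 2 = E x * Real.sin (θ x) ^ 2 := by rw [h2, h3]; ring
    have h5 : ω * u x ^ 2 / E x = Real.sin (θ x) ^ 2 / ω := by
      rw [div_eq_div_iff h1.ne' hω.ne']
      linear_combination h4
    simp only [h5]
    ring

lemma g_integral {α : ℝ} (h0 : 0 < α) (h1 : α < π / 2) :
    ∫ y in (0:ℝ)..π, 1 / max (Real.sin y ^ 2) (Real.sin α ^ 2) =
      2 * (Real.cos α / Real.sin α) + 2 * α / Real.sin α ^ 2 := by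
  have hsα : 0 < Real.sin α := Real.sin_pos_of_pos_of_lt_pi h0 (by linarith [Real.pi_pos])
  have hc : Continuous fun y : ℝ => 1 / max (Real.sin y ^ 2) (Real.sin α ^ 2) := by
    refine continuous_const.div (by fun_prop) fun y => ?_
    have : 0 < Real.sin α ^ 2 := by positivity
    exact (lt_max_of_lt_right this).ne'
  have hi : ∀ x y : ℝ, IntervalIntegrable
      (fun y : ℝ => 1 / max (Real.sin y ^ 2) (Real.sin α ^ 2)) volume x y :=
    fun x y => hc.intervalIntegrable x y
  rw [← intervalIntegral.integral_add_adjacent_intervals (hi 0 α) (hi α π),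
    ← intervalIntegral.integral_add_adjacent_intervals (hi α (π - α)) (hi (π - α) π)]
  have e1 : ∫ y in (0:ℝ)..α, 1 / max (Real.sin y ^ 2) (Real.sin α ^ 2) = α / Real.sin α ^ 2 := by
    rw [intervalIntegral.integral_congr (g := fun _ => 1 / Real.sin α ^ 2)]
    · simp [div_eq_mul_inv]
    · intro y hy
      rw [uIcc_of_le h0.le] at hy
      simp only
      rw [max_eq_right]
      have h2 : Real.sin y ≤ Real.sin α :=
        Real.sin_le_sin_of_le_of_le_pi_div_two (by linarith [hy.1, Real.pi_pos]) h1.le hy.2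
      have h3 : 0 ≤ Real.sin y := Real.sin_nonneg_of_nonneg_of_le_pi hy.1 (by linarith [hy.2])
      gcongr
  have e3 : ∫ y in (π - α)..π, 1 / max (Real.sin y ^ 2) (Real.sin α ^ 2) = α / Real.sin α ^ 2 := by
    rw [intervalIntegral.integral_congr (g := fun _ => 1 / Real.sin α ^ 2)]
    · simp [div_eq_mul_inv]
    · intro y hy
      rw [uIcc_of_le (by linarith)] at hy
      simp only
      rw [max_eq_right]
      rw [← Real.sin_pi_sub y]
      have h2 : Real.sin (π - y) ≤ Real.sin α :=
        Real.sin_le_sin_of_le_of_le_pi_div_two (by linarith [hy.2, Real.pi_pos]) h1.le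
          (by linarith [hy.1])
      have h3 : 0 ≤ Real.sin (π - y) :=
        Real.sin_nonneg_of_nonneg_of_le_pi (by linarith [hy.2]) (by linarith [hy.1])
      gcongr
  have hle : α ≤ π - α := by linarith
  have e2 : ∫ y in α..(π - α), 1 / max (Real.sin y ^ 2) (Real.sin α ^ 2)
      = 2 * (Real.cos α / Real.sin α) := by
    have hd : ∀ y ∈ uIcc α (π - α), HasDerivAt (fun y => -(Real.cos y / Real.sin y))
        (1 / max (Real.sin y ^ 2) (Real.sin α ^ 2)) y := by
      intro y hy
      rw [uIcc_of_le hle] at hy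
      have hs : 0 < Real.sin y :=
        Real.sin_pos_of_pos_of_lt_pi (by linarith [hy.1]) (by linarith [hy.2])
      have h2 : Real.sin α ≤ Real.sin y := by
        rcases le_total y (π / 2) with h | h
        · exact Real.sin_le_sin_of_le_of_le_pi_div_two (by linarith [Real.pi_pos]) h hy.1
        · rw [← Real.sin_pi_sub y]
          exact Real.sin_le_sin_of_le_of_le_pi_div_two (by linarith [Real.pi_pos])
            (by linarith) (by linarith [hy.2])
      rw [max_eq_left (by gcongr)]
      have h3 := ((Real.hasDerivAt_cos y).div (Real.hasDerivAt_sin y) hs.ne').neg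
      convert! h3 using 1
      rw [← neg_div]
      congr 1
      linear_combination -Real.sin_sq_add_cos_sq y
    rw [intervalIntegral.integral_eq_sub_of_hasDerivAt hd (hi _ _)]
    rw [Real.sin_pi_sub, Real.cos_pi_sub]
    ring
  rw [e1, e2, e3]
  ring

lemma lower_bound {T : ℝ} (hT : 0 < T) {n : ℕ} (hn : 1 ≤ n) {a : ℝ → ℝ}
    (ha : a ∈ LambdaTildeN T n) : betaT1 T n ≤ ∫ x in (0:ℝ)..T, |a x - lamT T n| := by
  obtain ⟨⟨-, -, hai⟩, ⟨hle, hlt⟩, u, v, ⟨hsol, hu0, hv0⟩, hne⟩ := ha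
  have hn' : (1:ℝ) ≤ n := by exact_mod_cast hn
  have hπ := Real.pi_pos
  set ω : ℝ := (2 * (n:ℝ) - 1) * π / T with hω
  have hωp : 0 < ω := by
    have : (0:ℝ) < 2 * n - 1 := by linarith
    positivity
  have hlam : lamT T n = ω ^ 2 := by rw [lamT, hω]; ring
  set b : ℝ → ℝ := fun x => a x - lamT T n with hbdef
  have hb : IntegrableOn b (Set.Icc 0 T) := hai.sub (by simp)
  have hbii : IntervalIntegrable b volume 0 T :=
    (intervalIntegrable_iff_integrableOn_Icc_of_le hT.le).mpr hb
  have hb0 : ∀ᵐ x, x ∈ Set.Icc 0 T → 0 ≤ b x := by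
    rw [ae_restrict_iff' measurableSet_Icc] at hle
    filter_upwards [hle] with x h hx
    exact sub_nonneg.mpr (h hx)
  have hbp : 0 < volume {x ∈ Set.Icc 0 T | 0 < b x} := by
    simpa only [hbdef, sub_pos] using hlt
  obtain ⟨hu, hv⟩ := sol_ACD hT hai hsol
  have hv' : ACD T v (fun x => -((ω ^ 2 + b x) * u x)) := by
    refine hv.congr' (Eventually.of_forall fun x _ => ?_)
    simp only [hbdef, hlam]; ring
  obtain ⟨θ, k, hkodd, hθT, hωk, hθ⟩ := prufer hT hωp hb hb0 hbp hsol.1 hu hv' hne hu0 hv0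
  have hωT : ω * T = (2 * (n:ℝ) - 1) * π := by rw [hω]; field_simp
  have hk : (2 * (n:ℤ) + 1) ≤ k := by
    have h1 : (2 * (n:ℝ) - 1) < k := by
      rw [hωT] at hωk
      exact lt_of_mul_lt_mul_right hωk hπ.le
    have h2 : (2 * (n:ℤ) - 1) < k := by exact_mod_cast h1
    obtain ⟨j, hj⟩ := hkodd
    omega
  set N : ℝ := 2 * (n:ℝ) + 1 with hN
  have hNp : 0 < N := by positivity
  have hkN : N ≤ k := by rw [hN]; exact_mod_cast hk
  set α : ℝ := ω * T / (2 * N) with hα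
  have hα0 : 0 < α := by positivity
  have hα1 : α < π / 2 := by
    rw [hα, hωT, div_lt_iff₀ (by positivity), hN]
    nlinarith
  have hsα : 0 < Real.sin α := Real.sin_pos_of_pos_of_lt_pi hα0 (by linarith [Real.pi_pos])
  set g : ℝ → ℝ := fun y : ℝ => 1 / max (Real.sin y ^ 2) (Real.sin α ^ 2) with hg
  have hmax : ∀ y, 0 < max (Real.sin y ^ 2) (Real.sin α ^ 2) := fun y =>
    lt_max_of_lt_right (by positivity)
  have hc : Continuous g := continuous_const.div (by fun_prop) fun y => (hmax y).ne'
  have hGd := hθ.comp hT (φ := fun y => ∫ t in (0:ℝ)..y, g t) (φ' := g)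
    (fun y => intervalIntegral.integral_hasDerivAt_right (hc.intervalIntegrable _ _)
      (hc.stronglyMeasurableAtFilter _ _) hc.continuousAt) hc
  have hR : IntervalIntegrable (fun x => b x / ω + ω / Real.sin α ^ 2) volume 0 T :=
    (hbii.div_const ω).add intervalIntegrable_const
  have hmain := hGd.sub_le hT hR (by
    filter_upwards [hb0] with x hx hxI
    have hbx := hx hxI
    have h1 : g (θ x) ≤ 1 / Real.sin α ^ 2 := by
      apply one_div_le_one_div_of_le (by positivity) (le_max_right _ _)
    have h2 : g (θ x) * Real.sin (θ x) ^ 2 ≤ 1 := by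
      simp only [hg]
      rw [div_mul_eq_mul_div, div_le_one (hmax _), one_mul]
      exact le_max_left _ _
    have h3 : 0 ≤ b x / ω := by positivity
    calc g (θ x) * (ω + b x * Real.sin (θ x) ^ 2 / ω)
        = g (θ x) * ω + (b x / ω) * (g (θ x) * Real.sin (θ x) ^ 2) := by ring
      _ ≤ (1 / Real.sin α ^ 2) * ω + (b x / ω) * 1 := by gcongr
      _ = _ := by ring)
  have hper : Function.Periodic g π := by
    intro y
    simp only [hg, Real.sin_add_pi, neg_sq]
  rw [intervalIntegral.integral_interval_sub_left (hc.intervalIntegrable _ _)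
    (hc.intervalIntegrable _ _), hθT] at hmain
  have h1 := hper.intervalIntegral_add_zsmul_eq k (θ 0) (fun x y => hc.intervalIntegrable x y)
  rw [zsmul_eq_mul, zsmul_eq_mul, hper.intervalIntegral_add_eq (θ 0) 0, zero_add] at h1
  have h2 : ∫ y in (0:ℝ)..π, g y = 2 * (Real.cos α / Real.sin α) + 2 * α / Real.sin α ^ 2 :=
    g_integral hα0 hα1
  have hcα : 0 < Real.cos α := Real.cos_pos_of_mem_Ioo ⟨by linarith, hα1⟩
  rw [h1, h2, intervalIntegral.integral_add (hbii.div_const ω) intervalIntegrable_const,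
    intervalIntegral.integral_div, intervalIntegral.integral_const, smul_eq_mul, sub_zero] at hmain
  have h3 : N * (2 * (Real.cos α / Real.sin α) + 2 * α / Real.sin α ^ 2) ≤
      k * (2 * (Real.cos α / Real.sin α) + 2 * α / Real.sin α ^ 2) := by gcongr
  have h4 : N * (2 * α / Real.sin α ^ 2) = T * (ω / Real.sin α ^ 2) := by
    rw [hα]; field_simp
  have h5 : N * (2 * (Real.cos α / Real.sin α)) ≤ (∫ x in (0:ℝ)..T, b x) / ω := by linarith
  rw [le_div_iff₀ hωp] at h5
  have h6 : ∫ x in (0:ℝ)..T, |a x - lamT T n| = ∫ x in (0:ℝ)..T, b x := by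
    apply intervalIntegral.integral_congr_ae
    filter_upwards [hb0] with x hx hxI
    rw [uIoc_of_le hT.le] at hxI
    exact abs_of_nonneg (hx (Ioc_subset_Icc_self hxI))
  rw [h6]
  refine le_trans (le_of_eq ?_) h5
  have h7 : (2 * (n:ℝ) - 1) * π / (2 * (2 * (n:ℝ) + 1)) = α := by rw [hα, hωT]
  rw [betaT1, h7, Real.cot_eq_cos_div_sin, hω]
  ring

lemma sol_cont {a u v : ℝ → ℝ} {c d : ℝ} (h : IsSolOn a u v c d) : ContinuousOn u (Set.Icc c d) :=
  fun x hx => (h.1 x hx).continuousWithinAt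

lemma sol_glue {a u1 v1 u2 v2 : ℝ → ℝ} {c d e : ℝ} (hcd : c < d) (hde : d < e)
    (ha : IntegrableOn a (Set.Icc c e)) (h1 : IsSolOn a u1 v1 c d) (h2 : IsSolOn a u2 v2 d e)
    (hu : u1 d = u2 d) (hv : v1 d = v2 d) :
    IsSolOn a (fun x => if x ≤ d then u1 x else u2 x) (fun x => if x ≤ d then v1 x else v2 x)
      c e := by
  have heq1 : ∀ (f g : ℝ → ℝ), ∀ y ∈ Set.Icc c d, (if y ≤ d then f y else g y) = f y :=
    fun f g y hy => if_pos hy.2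
  have heq2 : ∀ (f g : ℝ → ℝ), f d = g d → ∀ y ∈ Set.Icc d e, (if y ≤ d then f y else g y) = g y := by
    intro f g hfg y hy
    rcases hy.1.eq_or_lt with h | h
    · subst h; simp [hfg]
    · exact if_neg (not_le.mpr h)
  constructor
  · intro x hx
    rw [← Icc_union_Icc_eq_Icc hcd.le hde.le]
    apply HasDerivWithinAt.union
    · by_cases hxd : x ≤ d
      · simp only [if_pos hxd]
        exact (h1.1 x ⟨hx.1, hxd⟩).congr (heq1 u1 u2) (heq1 u1 u2 x ⟨hx.1, hxd⟩)
      · apply HasFDerivWithinAt.of_notMem_closure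
        rw [closure_Icc]
        exact fun h => hxd h.2
    · by_cases hxd : d ≤ x
      · simp only [heq2 v1 v2 hv x ⟨hxd, hx.2⟩]
        exact (h2.1 x ⟨hxd, hx.2⟩).congr (heq2 u1 u2 hu) (heq2 u1 u2 hu x ⟨hxd, hx.2⟩)
      · apply HasFDerivWithinAt.of_notMem_closure
        rw [closure_Icc]
        exact fun h => hxd h.1
  · intro x hx
    have hc : (if c ≤ d then v1 c else v2 c) = v1 c := if_pos hcd.le
    have i1 : ∀ y ∈ Set.Icc c d, ∫ t in c..y, a t * (if t ≤ d then u1 t else u2 t)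
        = ∫ t in c..y, a t * u1 t := by
      intro y hy
      apply intervalIntegral.integral_congr
      intro t ht
      rw [uIcc_of_le hy.1] at ht
      simp only [heq1 u1 u2 t ⟨ht.1, ht.2.trans hy.2⟩]
    simp only [hc]
    by_cases hxd : x ≤ d
    · rw [if_pos hxd, i1 x ⟨hx.1, hxd⟩]
      exact h1.2 x ⟨hx.1, hxd⟩
    · rw [if_neg hxd]
      push Not at hxd
      have i2 : ∫ t in d..x, a t * (if t ≤ d then u1 t else u2 t) = ∫ t in d..x, a t * u2 t := by
        apply intervalIntegral.integral_congr
        intro t ht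
        rw [uIcc_of_le hxd.le] at ht
        simp only [heq2 u1 u2 hu t ⟨ht.1, ht.2.trans hx.2⟩]
      have ii1 : IntervalIntegrable (fun t => a t * (if t ≤ d then u1 t else u2 t)) volume c d := by
        rw [intervalIntegrable_iff_integrableOn_Icc_of_le hcd.le]
        refine ((ha.mono_set (Icc_subset_Icc_right hde.le)).mul_continuousOn
          ((sol_cont h1).congr (heq1 u1 u2)) isCompact_Icc)
      have ii2 : IntervalIntegrable (fun t => a t * (if t ≤ d then u1 t else u2 t)) volume d x := by
        rw [intervalIntegrable_iff_integrableOn_Icc_of_le hxd.le]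
        refine ((ha.mono_set (Icc_subset_Icc hcd.le hx.2)).mul_continuousOn
          (((sol_cont h2).congr (heq2 u1 u2 hu)).mono (Icc_subset_Icc_right hx.2)) isCompact_Icc)
      rw [← intervalIntegral.integral_add_adjacent_intervals ii1 ii2, i1 d ⟨hcd.le, le_rfl⟩, i2,
        h2.2 x ⟨hxd.le, hx.2⟩, ← hv, h1.2 d ⟨hcd.le, le_rfl⟩]
      ring

lemma sol_const {a u v : ℝ → ℝ} {c d K : ℝ} (ha : ∀ x ∈ Set.Ioo c d, a x = K)
    (hu : ∀ x, HasDerivAt u (v x) x) (hv : ∀ x, HasDerivAt v (-(K * u x)) x) :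
    IsSolOn a u v c d := by
  refine ⟨fun x _ => (hu x).hasDerivWithinAt, fun x hx => ?_⟩
  have hcu : Continuous u := continuous_iff_continuousAt.mpr fun x => (hu x).continuousAt
  have h1 : ∫ t in c..x, a t * u t = ∫ t in c..x, K * u t := by
    apply intervalIntegral.integral_congr_ae
    have h2 : ∀ᵐ t : ℝ, t ≠ d := by simp [ae_iff, measure_singleton]
    filter_upwards [h2] with t ht htI
    rw [uIoc_of_le hx.1] at htI
    rw [ha t ⟨htI.1, lt_of_le_of_ne (htI.2.trans hx.2) ht⟩]
  have h3 := intervalIntegral.integral_eq_sub_of_hasDerivAt (f := v) (f' := fun t => -(K * u t))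
    (a := c) (b := x) (fun t _ => hv t) ((by fun_prop : Continuous fun t => -(K * u t)).intervalIntegrable _ _)
  rw [intervalIntegral.integral_neg] at h3
  rw [h1]; linarith

lemma sol_shift {a u v : ℝ → ℝ} {c d s κ : ℝ} (ha : ∀ x, a (x + s) = a x)
    (h : IsSolOn a u v c d) :
    IsSolOn a (fun x => κ * u (x - s)) (fun x => κ * v (x - s)) (c + s) (d + s) := by
  constructor
  · intro x hx
    have hx' : x - s ∈ Set.Icc c d := ⟨by linarith [hx.1], by linarith [hx.2]⟩
    have hm : Set.MapsTo (fun y => y - s) (Set.Icc (c + s) (d + s)) (Set.Icc c d) :=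
      fun y hy => ⟨by linarith [hy.1], by linarith [hy.2]⟩
    have h1 := (h.1 _ hx').comp x (((hasDerivAt_id x).sub_const s).hasDerivWithinAt
      (s := Set.Icc (c + s) (d + s))) hm
    rw [mul_one] at h1
    exact h1.const_mul κ
  · intro x hx
    have hx' : x - s ∈ Set.Icc c d := ⟨by linarith [hx.1], by linarith [hx.2]⟩
    have h1 := h.2 _ hx'
    have h2 : ∫ t in (c + s)..x, a t * (κ * u (t - s)) = κ * ∫ t in c..(x - s), a t * u t := by
      have h3 := intervalIntegral.integral_comp_sub_right (a := c + s) (b := x)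
        (fun t => a t * u t) s
      rw [add_sub_cancel_right] at h3
      rw [← h3, ← intervalIntegral.integral_const_mul]
      apply intervalIntegral.integral_congr
      intro t _
      have := ha (t - s)
      rw [sub_add_cancel] at this
      simp only [this]; ring
    simp only [add_sub_cancel_right]
    rw [h2, h1]; ring

lemma sol_iterate {a u v : ℝ → ℝ} {h : ℝ} (hh : 0 < h) (hper : Function.Periodic a h)
    (hai : ∀ x y, IntervalIntegrable a volume x y) (hs : IsSolOn a u v 0 h)
    (hu : u h = -u 0) (hv : v h = -v 0) (k : ℕ) :
    ∃ U V : ℝ → ℝ, IsSolOn a U V 0 ((k + 1 : ℕ) * h) ∧ U 0 = u 0 ∧ V 0 = v 0 ∧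
      U ((k + 1 : ℕ) * h) = (-1) ^ (k + 1) * u 0 ∧ V ((k + 1 : ℕ) * h) = (-1) ^ (k + 1) * v 0 := by
  induction k with
  | zero => exact ⟨u, v, by simpa using hs, rfl, rfl, by simpa using hu, by simpa using hv⟩
  | succ k ih =>
    obtain ⟨U, V, h1, hU0, hV0, hU, hV⟩ := ih
    have hp : ∀ x, a (x + (k + 1 : ℕ) * h) = a x := hper.nat_mul (k + 1)
    have h2 := sol_shift (κ := (-1) ^ (k + 1)) hp hs
    have e1 : h + ((k + 1 : ℕ) : ℝ) * h = ((k + 1 + 1 : ℕ) : ℝ) * h := by push_cast; ring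
    rw [zero_add, e1] at h2
    have p1 : (0:ℝ) < ((k + 1 : ℕ) : ℝ) * h := by positivity
    have p2 : ((k + 1 : ℕ) : ℝ) * h < ((k + 1 + 1 : ℕ) : ℝ) * h := by rw [← e1]; linarith
    have h3 := sol_glue p1 p2
      ((intervalIntegrable_iff_integrableOn_Icc_of_le (p1.trans p2).le).mp (hai _ _)) h1 h2
      (by rw [hU, sub_self]) (by rw [hV, sub_self])
    refine ⟨_, _, h3, ?_, ?_, ?_, ?_⟩
    · simp only [if_pos p1.le, hU0]
    · simp only [if_pos p1.le, hV0]
    · simp only [if_neg (not_le.mpr p2)]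
      rw [← e1, add_sub_cancel_right, hu]; ring
    · simp only [if_neg (not_le.mpr p2)]
      rw [← e1, add_sub_cancel_right, hv]; ring

lemma exists_mu {ω h δ : ℝ} (hω : 0 < ω) (hδ : 0 < δ) (hδh : δ < h / 2) (hωh : ω * h < π) :
    ∃ μ : ℝ, ω < μ ∧ 0 < Real.cos (μ * δ) ∧
      μ * Real.sin (μ * δ) * Real.sin (ω * (h / 2 - δ)) =
        ω * Real.cos (ω * (h / 2 - δ)) * Real.cos (μ * δ) ∧
      μ ^ 2 * δ ≤ ω * (Real.cos (ω * (h / 2 - δ)) / Real.sin (ω * (h / 2 - δ))) := by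
  have hπ := Real.pi_pos
  set p := h / 2 - δ with hp
  have hpp : 0 < p := by linarith
  have hωp : ω * p < π / 2 := by nlinarith
  have hωδ : ω * δ < π / 2 := by nlinarith
  have hs : 0 < Real.sin (ω * p) :=
    Real.sin_pos_of_pos_of_lt_pi (by positivity) (by linarith)
  set f : ℝ → ℝ := fun μ => μ * Real.sin (μ * δ) * Real.sin (ω * p) -
    ω * Real.cos (ω * p) * Real.cos (μ * δ) with hf
  have hfc : Continuous f := by fun_prop
  have hle : ω ≤ π / 2 / δ := by rw [le_div_iff₀ hδ]; exact hωδ.le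
  have f1 : f ω < 0 := by
    have h1 : f ω = -(ω * Real.cos (ω * p + ω * δ)) := by
      simp only [hf]; rw [Real.cos_add]; ring
    have h2 : ω * p + ω * δ = ω * h / 2 := by rw [hp]; ring
    have h3 : 0 < Real.cos (ω * h / 2) := by
      apply Real.cos_pos_of_mem_Ioo
      constructor
      · have : 0 < ω * h := mul_pos hω (by linarith)
        linarith
      · linarith
    rw [h1, h2]
    have := mul_pos hω h3
    linarith
  have f2 : 0 < f (π / 2 / δ) := by
    have h1 : π / 2 / δ * δ = π / 2 := by field_simp
    simp only [hf, h1, Real.sin_pi_div_two, Real.cos_pi_div_two, mul_zero, sub_zero, mul_one]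
    positivity
  obtain ⟨μ, hμ, hμ0⟩ := intermediate_value_Ioo hle hfc.continuousOn ⟨f1, f2⟩
  have hμp : 0 < μ := hω.trans hμ.1
  have hμδ : μ * δ < π / 2 := by rw [← lt_div_iff₀ hδ]; exact hμ.2
  have hc : 0 < Real.cos (μ * δ) :=
    Real.cos_pos_of_mem_Ioo ⟨by have := mul_pos hμp hδ; linarith, hμδ⟩
  have heq : μ * Real.sin (μ * δ) * Real.sin (ω * p) =
        ω * Real.cos (ω * p) * Real.cos (μ * δ) := sub_eq_zero.mp hμ0
  refine ⟨μ, hμ.1, hc, heq, ?_⟩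
  have ht := Real.lt_tan (mul_pos hμp hδ) hμδ
  rw [Real.tan_eq_sin_div_cos, lt_div_iff₀ hc] at ht
  rw [← mul_div_assoc, le_div_iff₀ hs]
  have h1 : μ ^ 2 * δ * Real.sin (ω * p) * Real.cos (μ * δ) ≤
      ω * Real.cos (ω * p) * Real.cos (μ * δ) := by
    rw [← heq]
    have := mul_le_mul_of_nonneg_left ht.le (mul_pos hμp hs).le
    linarith
  exact le_of_mul_le_mul_right h1 hc

lemma upper_bound {T ω h δ : ℝ} {n : ℕ} (hω : 0 < ω) (hδ : 0 < δ) (hδh : δ < h / 2)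
    (hωh : ω * h < π) (hTh : T = (2 * n + 1) * h) (hlam : lamT T n = ω ^ 2) :
    ∃ a ∈ LambdaTildeN T n, (∫ x in (0:ℝ)..T, |a x - lamT T n|) ≤
      2 * (2 * n + 1) * ω * (Real.cos (ω * (h / 2 - δ)) / Real.sin (ω * (h / 2 - δ))) := by
  have hπ := Real.pi_pos
  obtain ⟨μ, hμω, hc, heq, hbd⟩ := exists_mu hω hδ hδh hωh
  set p := h / 2 - δ with hp
  have hh : 0 < h := by linarith
  have hpp : 0 < p := by linarith
  have h2p : 2 * p < h := by linarith
  have hs : 0 < Real.sin (ω * p) :=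
    Real.sin_pos_of_pos_of_lt_pi (by positivity) (by nlinarith)
  have hμp : 0 < μ := hω.trans hμω
  have hsq : ω ^ 2 < μ ^ 2 := by gcongr
  set a : ℝ → ℝ := fun x => if Int.fract (x / h) < 2 * p / h then ω ^ 2 else μ ^ 2 with ha
  have ham : Measurable a :=
    Measurable.ite (measurableSet_lt (measurable_fract.comp (measurable_id.div_const h))
      measurable_const) measurable_const measurable_const
  have hper : Function.Periodic a h := by
    intro x
    simp only [ha]
    rw [add_div, div_self hh.ne', Int.fract_add_one]
  have hlow : ∀ x, ω ^ 2 ≤ a x := by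
    intro x; simp only [ha]; split_ifs
    · exact le_rfl
    · exact hsq.le
  have hup : ∀ x, a x ≤ μ ^ 2 := by
    intro x; simp only [ha]; split_ifs
    · exact hsq.le
    · exact le_rfl
  have hai : ∀ x y, IntervalIntegrable a volume x y := by
    intro x y
    refine (intervalIntegrable_const (c := μ ^ 2)).mono_fun ham.aestronglyMeasurable
      (Eventually.of_forall fun t => ?_)
    beta_reduce
    rw [Real.norm_of_nonneg ((sq_nonneg ω).trans (hlow t)), Real.norm_of_nonneg (sq_nonneg μ)]
    exact hup t
  have hfr : ∀ x, 0 ≤ x → x < h → Int.fract (x / h) = x / h := by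
    intro x h0 h1
    rw [Int.fract_eq_self]
    exact ⟨by positivity, by rw [div_lt_one hh]; exact h1⟩
  have ha1 : ∀ x ∈ Set.Ioo 0 (2 * p), a x = ω ^ 2 := by
    intro x hx
    simp only [ha]
    rw [hfr x hx.1.le (hx.2.trans h2p), if_pos (by gcongr; exact hx.2)]
  have ha2 : ∀ x ∈ Set.Ioo (2 * p) h, a x = μ ^ 2 := by
    intro x hx
    simp only [ha]
    rw [hfr x (by linarith [hx.1]) hx.2, if_neg (by rw [not_lt]; gcongr; exact hx.1.le)]
  set A := Real.sin (ω * p) / Real.cos (μ * δ) with hA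
  have hAc : A * Real.cos (μ * δ) = Real.sin (ω * p) := by rw [hA]; field_simp
  have hAs : A * μ * Real.sin (μ * δ) = ω * Real.cos (ω * p) := by
    rw [hA]; field_simp; linarith
  have lin : ∀ (κ s x : ℝ), HasDerivAt (fun x => κ * (x - s)) κ x := by
    intro κ s x
    simpa using ((hasDerivAt_id x).sub_const s).const_mul κ
  have s1 : IsSolOn a (fun x => Real.sin (ω * (x - p))) (fun x => ω * Real.cos (ω * (x - p)))
      0 (2 * p) := by
    refine sol_const (K := ω ^ 2) ha1 (fun x => ?_) (fun x => ?_)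
    · have := (lin ω p x).sin
      rwa [mul_comm] at this
    · have := ((lin ω p x).cos).const_mul ω
      convert! this using 1
      ring
  have s2 : IsSolOn a (fun x => A * Real.cos (μ * (x - (2 * p + δ))))
      (fun x => -(A * μ * Real.sin (μ * (x - (2 * p + δ))))) (2 * p) h := by
    refine sol_const (K := μ ^ 2) ha2 (fun x => ?_) (fun x => ?_)
    · have := ((lin μ (2 * p + δ) x).cos).const_mul A
      convert! this using 1
      ring
    · have := (((lin μ (2 * p + δ) x).sin).const_mul (A * μ)).neg
      convert! this using 1
      ring
  have e1 : μ * (2 * p - (2 * p + δ)) = -(μ * δ) := by ring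
  have e2 : μ * (h - (2 * p + δ)) = μ * δ := by rw [hp]; ring
  have e3 : ω * (2 * p - p) = ω * p := by ring
  have e4 : ω * (0 - p) = -(ω * p) := by ring
  have hcell := sol_glue (by linarith) h2p
    ((intervalIntegrable_iff_integrableOn_Icc_of_le hh.le).mp (hai 0 h)) s1 s2
    (by rw [e1, e3, Real.cos_neg, hAc]) (by rw [e1, e3, Real.sin_neg, mul_neg, neg_neg, hAs])
  obtain ⟨U, V, hUV, hU0, hV0, hU, hV⟩ := sol_iterate hh hper hai hcell
    (by
      simp only [if_neg (not_le.mpr h2p), if_pos (by linarith : (0:ℝ) ≤ 2 * p)]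
      rw [e2, e4, Real.sin_neg, neg_neg, hAc])
    (by
      simp only [if_neg (not_le.mpr h2p), if_pos (by linarith : (0:ℝ) ≤ 2 * p)]
      rw [e2, e4, Real.cos_neg, hAs]) (2 * n)
  have hTT : ((2 * n + 1 : ℕ) : ℝ) * h = T := by rw [hTh]; push_cast; ring
  have hT : 0 < T := by rw [hTh]; positivity
  have hhT : h ≤ T := by
    rw [hTh]
    nlinarith [(Nat.cast_nonneg n : (0:ℝ) ≤ n)]
  have hodd : ((-1:ℝ)) ^ (2 * n + 1) = -1 := Odd.neg_one_pow ⟨n, rfl⟩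
  rw [hTT] at hUV hU hV
  rw [hodd] at hU hV
  refine ⟨a, ⟨⟨ham, ?_, ?_⟩, ⟨?_, ?_⟩, U, V, ⟨hUV, ?_, ?_⟩, 0, ⟨le_rfl, hT.le⟩, ?_⟩, ?_⟩
  · intro x
    rw [← hTT]
    exact hper.nat_mul (2 * n + 1) x
  · exact (intervalIntegrable_iff_integrableOn_Icc_of_le hT.le).mp (hai 0 T)
  · refine Eventually.of_forall fun x => ?_
    simp only [hlam]; exact hlow x
  · have hsub : Set.Ioo (2 * p) h ⊆ {x ∈ Set.Icc 0 T | (fun _ => lamT T n) x < a x} := by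
      intro x hx
      refine ⟨⟨by linarith [hx.1], by linarith [hx.2]⟩, ?_⟩
      simp only [hlam, ha2 x hx]
      exact hsq
    refine lt_of_lt_of_le ?_ (measure_mono hsub)
    rw [Real.volume_Ioo]
    simpa using h2p
  · rw [hU, hU0]; ring
  · rw [hV, hV0]; ring
  · rw [hU0]
    simp only [if_pos (by linarith : (0:ℝ) ≤ 2 * p)]
    rw [e4, Real.sin_neg]
    exact neg_ne_zero.mpr hs.ne'
  · have habs : ∀ x, |a x - lamT T n| = a x - ω ^ 2 := by
      intro x
      rw [hlam, abs_of_nonneg (sub_nonneg.mpr (hlow x))]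
    simp only [habs]
    have hper2 : Function.Periodic (fun x => a x - ω ^ 2) h := by
      intro x; simp only [hper x]
    have hii : ∀ x y, IntervalIntegrable (fun x => a x - ω ^ 2) volume x y :=
      fun x y => (hai x y).sub intervalIntegrable_const
    have h1 := hper2.intervalIntegral_add_zsmul_eq ((2 * n + 1 : ℕ) : ℤ) 0 hii
    rw [zsmul_eq_mul, zsmul_eq_mul, zero_add, zero_add, Int.cast_natCast, hTT] at h1
    have h2 : ∫ x in (0:ℝ)..h, (a x - ω ^ 2) = 2 * δ * (μ ^ 2 - ω ^ 2) := by
      have hne1 : ∀ᵐ t : ℝ, t ≠ 2 * p := by simp [ae_iff, measure_singleton]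
      have hne2 : ∀ᵐ t : ℝ, t ≠ h := by simp [ae_iff, measure_singleton]
      rw [← intervalIntegral.integral_add_adjacent_intervals (hii 0 (2 * p)) (hii (2 * p) h)]
      have i1 : ∫ x in (0:ℝ)..(2 * p), (a x - ω ^ 2) = ∫ x in (0:ℝ)..(2 * p), (0:ℝ) := by
        apply intervalIntegral.integral_congr_ae
        filter_upwards [hne1] with t ht htI
        rw [uIoc_of_le (by linarith)] at htI
        rw [ha1 t ⟨htI.1, lt_of_le_of_ne htI.2 ht⟩, sub_self]
      have i2 : ∫ x in (2 * p)..h, (a x - ω ^ 2) = ∫ x in (2 * p)..h, (μ ^ 2 - ω ^ 2) := by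
        apply intervalIntegral.integral_congr_ae
        filter_upwards [hne2] with t ht htI
        rw [uIoc_of_le (by linarith)] at htI
        rw [ha2 t ⟨htI.1, lt_of_le_of_ne htI.2 ht⟩]
      rw [i1, i2, intervalIntegral.integral_const, intervalIntegral.integral_const, smul_eq_mul,
        smul_eq_mul, hp]
      ring
    rw [h1, h2]
    have h3 : 2 * δ * (μ ^ 2 - ω ^ 2) ≤ 2 * (ω * (Real.cos (ω * p) / Real.sin (ω * p))) := by
      have : 0 ≤ δ * ω ^ 2 := by positivity
      linarith
    have h4 := mul_le_mul_of_nonneg_left h3 (Nat.cast_nonneg (α := ℝ) (2 * n + 1))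
    refine h4.trans (le_of_eq ?_)
    push_cast
    ring

theorem stmt10 (T : ℝ) (hT : 0 < T) (n : ℕ) (hn : 1 ≤ n) :
    (∀ ε > (0:ℝ), ∃ a ∈ LambdaTildeN T n,
        (∫ x in (0:ℝ)..T, |a x - lamT T n|) < betaT1 T n + ε) ∧
    sInf ((fun a : ℝ → ℝ => ∫ x in (0:ℝ)..T, |a x - lamT T n|) '' LambdaTildeN T n) =
      betaT1 T n := by
  have hup : ∀ ε > (0:ℝ), ∃ a ∈ LambdaTildeN T n,
        (∫ x in (0:ℝ)..T, |a x - lamT T n|) < betaT1 T n + ε := by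
    intro ε hε
    have hn' : (1:ℝ) ≤ n := by exact_mod_cast hn
    have hπ := Real.pi_pos
    obtain ⟨ω, hω⟩ : ∃ ω : ℝ, ω = (2 * (n:ℝ) - 1) * π / T := ⟨_, rfl⟩
    have hωp : 0 < ω := by
      have : (0:ℝ) < 2 * n - 1 := by linarith
      rw [hω]; positivity
    have hlam : lamT T n = ω ^ 2 := by rw [lamT, hω]; ring
    obtain ⟨h, hh⟩ : ∃ h : ℝ, h = T / (2 * n + 1) := ⟨_, rfl⟩
    have hhp : 0 < h := by rw [hh]; positivity
    have hTh : T = (2 * n + 1) * h := by rw [hh]; field_simp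
    have hωh' : ω * h = (2 * (n:ℝ) - 1) * π / (2 * n + 1) := by
      rw [hω, hh]; field_simp
    have hωh : ω * h < π := by
      rw [hωh', div_lt_iff₀ (by positivity)]
      nlinarith
    have hs : 0 < Real.sin (ω * (h / 2 - 0)) :=
      Real.sin_pos_of_pos_of_lt_pi (by rw [sub_zero]; positivity) (by nlinarith [mul_pos hωp hhp])
    have hβ : betaT1 T n = 2 * (2 * n + 1) * ω *
        (Real.cos (ω * (h / 2 - 0)) / Real.sin (ω * (h / 2 - 0))) := by
      have h7 : (2 * (n:ℝ) - 1) * π / (2 * (2 * (n:ℝ) + 1)) = ω * (h / 2 - 0) := by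
        have : ω * (h / 2 - 0) = ω * h / 2 := by ring
        rw [this, hωh']; field_simp
      rw [betaT1, h7, Real.cot_eq_cos_div_sin, hω]
      ring
    have hcont : ContinuousAt (fun δ : ℝ => 2 * (2 * n + 1) * ω *
        (Real.cos (ω * (h / 2 - δ)) / Real.sin (ω * (h / 2 - δ)))) 0 :=
      continuousAt_const.mul (ContinuousAt.div (by fun_prop) (by fun_prop) hs.ne')
    have hev : ∀ᶠ δ in 𝓝 (0:ℝ), 2 * (2 * n + 1) * ω *
        (Real.cos (ω * (h / 2 - δ)) / Real.sin (ω * (h / 2 - δ))) < betaT1 T n + ε := by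
      apply hcont.eventually_lt_const
      beta_reduce
      rw [← hβ]; linarith
    have hev2 : ∀ᶠ δ in 𝓝[>] (0:ℝ), 0 < δ ∧ δ < h / 2 ∧ 2 * (2 * n + 1) * ω *
        (Real.cos (ω * (h / 2 - δ)) / Real.sin (ω * (h / 2 - δ))) < betaT1 T n + ε := by
      have h1 : ∀ᶠ δ in 𝓝 (0:ℝ), δ < h / 2 := eventually_lt_nhds (by positivity)
      filter_upwards [self_mem_nhdsWithin, hev.filter_mono nhdsWithin_le_nhds,
        h1.filter_mono nhdsWithin_le_nhds] with δ h1 h2 h3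
      exact ⟨h1, h3, h2⟩
    obtain ⟨δ, h1, h2, h3⟩ := hev2.exists
    obtain ⟨a, ha, hle⟩ := upper_bound hωp h1 h2 hωh hTh hlam
    exact ⟨a, ha, hle.trans_lt h3⟩
  refine ⟨hup, ?_⟩
  apply csInf_eq_of_forall_ge_of_forall_gt_exists_lt
  · obtain ⟨a, ha, -⟩ := hup 1 one_pos
    exact ⟨_, a, ha, rfl⟩
  · rintro _ ⟨a, ha, rfl⟩
    exact lower_bound hT hn ha
  · intro w hw
    obtain ⟨a, ha, h⟩ := hup (w - betaT1 T n) (by linarith)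
    exact ⟨_, ⟨a, ha, rfl⟩, by simpa using h⟩
end

section
/- Suppose a ∈ L_T and that there exist p ∈ ℕ (p ≥ 1) and k ∈ [p²π²/T², (p+1)²π²/T²] such that k ≤ a(x) for a.e. x and ∫_0^T |a(x)| dx ≤ kT + 2(p+1)√k · cot(√k·T/(2(p+1))). Then the Hill equation u'' + a(x)u = 0 is stable: every solution u : ℝ → ℝ satisfies sup_{x ∈ ℝ} (|u(x)| + |u'(x)|) < ∞. -/
open MeasureTheory Set Real

namespace HillAux

/-- Absolutely continuous on every interval, with prescribed a.e. derivative. -/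
def ACD (f f' : ℝ → ℝ) : Prop :=
  (∀ x y, AbsolutelyContinuousOnInterval f x y) ∧ ∀ᵐ x : ℝ, HasDerivAt f (f' x) x

lemma ACD.congr {f f' g' : ℝ → ℝ} (h : ACD f f') (hg : ∀ᵐ x : ℝ, f' x = g' x) : ACD f g' := by
  refine ⟨h.1, ?_⟩
  filter_upwards [h.2, hg] with x h1 h2
  rwa [← h2]

lemma ACD.continuous {f f' : ℝ → ℝ} (h : ACD f f') : Continuous f := by
  rw [continuous_iff_continuousAt]
  intro x
  have := (h.1 (x - 1) (x + 1)).continuousOn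
  rw [uIcc_of_le (by linarith)] at this
  exact this.continuousAt (Icc_mem_nhds (by linarith) (by linarith))

lemma ACD.intervalIntegrable {f f' : ℝ → ℝ} (h : ACD f f') (x y : ℝ) :
    IntervalIntegrable f' volume x y := by
  refine (h.1 x y).intervalIntegrable_deriv.congr_ae ?_
  refine ae_restrict_of_ae ?_
  filter_upwards [h.2] with t ht
  exact ht.deriv

lemma ACD.integral {f f' : ℝ → ℝ} (h : ACD f f') (x y : ℝ) :
    ∫ t in x..y, f' t = f y - f x := by
  rw [← (h.1 x y).integral_deriv_eq_sub]
  apply intervalIntegral.integral_congr_ae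
  filter_upwards [h.2] with t ht _
  exact ht.deriv.symm

lemma ACD.of_C1 {f f' : ℝ → ℝ} (h : ∀ x, HasDerivAt f (f' x) x) (hc : Continuous f') :
    ACD f f' := by
  refine ⟨fun x y => ?_, Filter.Eventually.of_forall h⟩
  obtain ⟨C, hC⟩ := isCompact_uIcc.exists_bound_of_continuousOn (s := uIcc x y) hc.continuousOn
  have : LipschitzOnWith (Real.toNNReal C) f (uIcc x y) := by
    apply (convex_uIcc x y).lipschitzOnWith_of_nnnorm_hasDerivWithin_le
      (fun t _ => (h t).hasDerivWithinAt)
    intro t ht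
    rw [← NNReal.coe_le_coe, coe_nnnorm]
    exact (hC t ht).trans (Real.le_coe_toNNReal C)
  exact this.absolutelyContinuousOnInterval

lemma ACD.add {f f' g g' : ℝ → ℝ} (hf : ACD f f') (hg : ACD g g') :
    ACD (fun x => f x + g x) (fun x => f' x + g' x) := by
  refine ⟨fun x y => (hf.1 x y).add (hg.1 x y), ?_⟩
  filter_upwards [hf.2, hg.2] with x h1 h2 using h1.add h2

lemma ACD.sub {f f' g g' : ℝ → ℝ} (hf : ACD f f') (hg : ACD g g') :
    ACD (fun x => f x - g x) (fun x => f' x - g' x) := by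
  refine ⟨fun x y => (hf.1 x y).sub (hg.1 x y), ?_⟩
  filter_upwards [hf.2, hg.2] with x h1 h2 using h1.sub h2

lemma ACD.mul {f f' g g' : ℝ → ℝ} (hf : ACD f f') (hg : ACD g g') :
    ACD (fun x => f x * g x) (fun x => f' x * g x + f x * g' x) := by
  refine ⟨fun x y => (hf.1 x y).mul (hg.1 x y), ?_⟩
  filter_upwards [hf.2, hg.2] with x h1 h2 using h1.mul h2

lemma ACD.const_mul {f f' : ℝ → ℝ} (c : ℝ) (hf : ACD f f') :
    ACD (fun x => c * f x) (fun x => c * f' x) := by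
  refine ⟨fun x y => (hf.1 x y).const_mul c, ?_⟩
  filter_upwards [hf.2] with x h1 using h1.const_mul c

lemma ACD.comp {f f' g g' : ℝ → ℝ} (hf : ACD f f') (hg : ∀ x, HasDerivAt g (g' x) x)
    (hc : Continuous g') : ACD (fun x => g (f x)) (fun x => g' (f x) * f' x) := by
  refine ⟨fun x y => ?_, ?_⟩
  · obtain ⟨R, hR⟩ := isCompact_uIcc.exists_bound_of_continuousOn (s := uIcc x y)
      hf.continuous.continuousOn
    obtain ⟨C, hC⟩ := isCompact_Icc.exists_bound_of_continuousOn (s := Icc (-R) R) hc.continuousOn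
    have hL : LipschitzOnWith (Real.toNNReal C) g (Icc (-R) R) := by
      apply (convex_Icc (-R) R).lipschitzOnWith_of_nnnorm_hasDerivWithin_le
        (fun t _ => (hg t).hasDerivWithinAt)
      intro t ht
      rw [← NNReal.coe_le_coe, coe_nnnorm]
      exact (hC t ht).trans (Real.le_coe_toNNReal C)
    set K : ℝ := (Real.toNNReal C : ℝ) with hK
    have hK0 : 0 ≤ K := NNReal.coe_nonneg _
    have h := hf.1 x y
    rw [absolutelyContinuousOnInterval_iff] at h ⊢
    intro ε hε
    obtain ⟨δ, hδ, H⟩ := h (ε / (K + 1)) (by positivity)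
    refine ⟨δ, hδ, fun E hE hEd => ?_⟩
    have h1 := H E hE hEd
    calc ∑ i ∈ Finset.range E.1, dist (g (f (E.2 i).1)) (g (f (E.2 i).2))
        ≤ ∑ i ∈ Finset.range E.1, K * dist (f (E.2 i).1) (f (E.2 i).2) := by
          apply Finset.sum_le_sum
          intro i hi
          have h2 := hE.1 i hi
          exact hL.dist_le_mul _ (abs_le.mp (hR _ h2.1)) _ (abs_le.mp (hR _ h2.2))
      _ = K * ∑ i ∈ Finset.range E.1, dist (f (E.2 i).1) (f (E.2 i).2) := by
          rw [Finset.mul_sum]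
      _ ≤ (K + 1) * ∑ i ∈ Finset.range E.1, dist (f (E.2 i).1) (f (E.2 i).2) := by
          apply mul_le_mul_of_nonneg_right (by linarith)
          exact Finset.sum_nonneg fun i _ => dist_nonneg
      _ < (K + 1) * (ε / (K + 1)) := by
          apply mul_lt_mul_of_pos_left h1 (by linarith)
      _ = ε := by field_simp
  · filter_upwards [hf.2] with t ht
    exact (hg (f t)).comp t ht

lemma ACD.of_integral {q : ℝ → ℝ} (c : ℝ) (hq : ∀ x y, IntervalIntegrable q volume x y) :
    ACD (fun x => c + ∫ t in (0:ℝ)..x, q t) q := by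
  have hli : LocallyIntegrable q volume := by
    rw [locallyIntegrable_iff]
    intro K hK
    obtain ⟨R, hR⟩ := hK.isBounded.subset_closedBall (0:ℝ)
    rw [Real.closedBall_eq_Icc] at hR
    have h1 := hq (0 - |R|) (0 + |R|)
    rw [intervalIntegrable_iff_integrableOn_Icc_of_le (by linarith [abs_nonneg R])] at h1
    exact h1.mono_set (hR.trans (Icc_subset_Icc (by linarith [le_abs_self R])
      (by linarith [le_abs_self R])))
  refine ⟨fun x y => ?_, ?_⟩
  · have h0 : AbsolutelyContinuousOnInterval (fun _ : ℝ => c) x y :=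
      ((LipschitzWith.const c).lipschitzOnWith (s := uIcc x y)).absolutelyContinuousOnInterval
    set m := min 0 (min x y)
    set M := max 0 (max x y)
    have hmM : m ≤ M := (min_le_left _ _).trans (le_max_left _ _)
    have h1 : AbsolutelyContinuousOnInterval (fun x => ∫ t in (0:ℝ)..x, q t) m M :=
      (hq m M).absolutelyContinuousOnInterval_intervalIntegral
        (by rw [uIcc_of_le hmM]; exact ⟨min_le_left _ _, le_max_left _ _⟩)
    refine h0.add (h1.mono ?_)
    rw [uIcc_of_le hmM, uIcc]
    exact Icc_subset_Icc (min_le_right _ _) (le_max_right _ _)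
  · filter_upwards [LocallyIntegrable.ae_hasDerivAt_integral hli] with x hx
    exact (hx 0).const_add c

/-- Gronwall-type uniqueness. -/
lemma gronwall {f f' κ : ℝ → ℝ} (hf : ACD f f') (hκ : ∀ x y, IntervalIntegrable κ volume x y)
    (h0 : ∀ x, 0 ≤ f x) (hb : ∀ᵐ x : ℝ, |f' x| ≤ κ x * f x) {x₀ : ℝ} (hx0 : f x₀ = 0) (x : ℝ) :
    f x = 0 := by
  have hK := ACD.of_integral 0 hκ
  set K : ℝ → ℝ := fun x => 0 + ∫ t in (0:ℝ)..x, κ t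
  have hE1 : ACD (fun x => Real.exp (K x)) (fun x => Real.exp (K x) * κ x) :=
    hK.comp Real.hasDerivAt_exp Real.continuous_exp
  have hE2 : ACD (fun x => Real.exp (-K x)) (fun x => -Real.exp (-K x) * κ x) :=
    hK.comp (g := fun x => Real.exp (-x)) (g' := fun x => -Real.exp (-x))
      (fun x => by simpa using (hasDerivAt_neg x).exp) (by fun_prop)
  rcases le_total x₀ x with hx | hx
  · have h1 := (hf.mul hE2).integral x₀ x
    have h2 : 0 ≤ ∫ t in x₀..x, -(f' t * Real.exp (-K t) + f t * (-Real.exp (-K t) * κ t)) := by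
      apply intervalIntegral.integral_nonneg_of_ae hx
      filter_upwards [hb] with t ht
      have := (abs_le.mp ht).2
      have h3 := Real.exp_pos (-K t)
      simp only [Pi.zero_apply]
      nlinarith
    rw [intervalIntegral.integral_neg, h1, hx0] at h2
    have h3 := Real.exp_pos (-K x)
    have h4 := h0 x
    have : f x * Real.exp (-K x) ≤ 0 := by linarith
    by_contra hne
    have : 0 < f x * Real.exp (-K x) := mul_pos (lt_of_le_of_ne h4 (Ne.symm hne)) h3
    linarith
  · have h1 := (hf.mul hE1).integral x x₀
    have h2 : 0 ≤ ∫ t in x..x₀, (f' t * Real.exp (K t) + f t * (Real.exp (K t) * κ t)) := by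
      apply intervalIntegral.integral_nonneg_of_ae hx
      filter_upwards [hb] with t ht
      have := (abs_le.mp ht).1
      have h3 := Real.exp_pos (K t)
      simp only [Pi.zero_apply]
      nlinarith
    rw [h1, hx0] at h2
    have h3 := Real.exp_pos (K x)
    have h4 := h0 x
    have : f x * Real.exp (K x) ≤ 0 := by linarith
    by_contra hne
    have : 0 < f x * Real.exp (K x) := mul_pos (lt_of_le_of_ne h4 (Ne.symm hne)) h3
    linarith

/-- Solutions of the Hill equation with coefficient a; v is the derivative of u. -/
structure Sol (a u v : ℝ → ℝ) : Prop where
  d : ∀ x, HasDerivAt u (v x) x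
  ac : ACD v (fun x => -(a x * u x))

lemma Sol.u_ac {a u v : ℝ → ℝ} (h : Sol a u v) : ACD u v := ACD.of_C1 h.d h.ac.continuous

lemma Sol.of_integral {a u v : ℝ → ℝ} (ha : ∀ x y, IntervalIntegrable a volume x y)
    (hd : ∀ x, HasDerivAt u (v x) x) (c : ℝ)
    (hv : ∀ x, v x = c - ∫ t in (0:ℝ)..x, a t * u t) : Sol a u v := by
  refine ⟨hd, ?_⟩
  have huc : Continuous u := continuous_iff_continuousAt.mpr fun x => (hd x).continuousAt
  have hq : ∀ x y, IntervalIntegrable (fun t => -(a t * u t)) volume x y := fun x y =>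
    ((ha x y).mul_continuousOn huc.continuousOn).neg
  have h := ACD.of_integral c hq
  have e : v = fun x => c + ∫ t in (0:ℝ)..x, -(a t * u t) := by
    funext x
    rw [hv x, intervalIntegral.integral_neg]; ring
  rw [e]; exact h

lemma Sol.unique {a u v : ℝ → ℝ} (ha : ∀ x y, IntervalIntegrable a volume x y) (h : Sol a u v)
    {x₀ : ℝ} (hu : u x₀ = 0) (hv : v x₀ = 0) (x : ℝ) : u x = 0 ∧ v x = 0 := by
  have hf := (h.u_ac.mul h.u_ac).add (h.ac.mul h.ac)
  have hκ : ∀ x y, IntervalIntegrable (fun t => 1 + |a t|) volume x y := fun x y =>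
    intervalIntegrable_const.add (ha x y).abs
  have := gronwall hf hκ
    (fun x => add_nonneg (mul_self_nonneg _) (mul_self_nonneg _)) (by
    refine Filter.Eventually.of_forall fun x => ?_
    have e : v x * u x + u x * v x + (-(a x * u x) * v x + v x * -(a x * u x))
      = (1 - a x) * (2 * (u x * v x)) := by ring
    rw [e, abs_mul]
    have h1 : |1 - a x| ≤ 1 + |a x| := by
      simpa using abs_sub 1 (a x)
    have h2 : |2 * (u x * v x)| ≤ u x * u x + v x * v x := by
      rw [abs_le]; constructor <;> nlinarith [sq_nonneg (u x + v x), sq_nonneg (u x - v x)]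
    exact mul_le_mul h1 h2 (abs_nonneg _) (by positivity)) (x₀ := x₀) (by simp [hu, hv]) x
  constructor <;> nlinarith [mul_self_nonneg (u x), mul_self_nonneg (v x)]

lemma Sol.comb {a u v u' v' : ℝ → ℝ} (h : Sol a u v) (h' : Sol a u' v') (α β : ℝ) :
    Sol a (fun x => α * u x + β * u' x) (fun x => α * v x + β * v' x) := by
  refine ⟨fun x => ((h.d x).const_mul α).add ((h'.d x).const_mul β), ?_⟩
  refine ((h.ac.const_mul α).add (h'.ac.const_mul β)).congr
    (Filter.Eventually.of_forall fun x => ?_)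
  ring

lemma Sol.shift {a u v : ℝ → ℝ} (ha : ∀ x y, IntervalIntegrable a volume x y) (h : Sol a u v)
    {T : ℝ} (hp : ∀ x, a (x + T) = a x) :
    Sol a (fun x => u (x + T)) (fun x => v (x + T)) := by
  apply Sol.of_integral ha (fun x => HasDerivAt.comp_add_const x T (h.d (x + T))) (v T)
  intro x
  have h1 := h.ac.integral (0 + T) (x + T)
  rw [← intervalIntegral.integral_comp_add_right (fun t => -(a t * u t)) T,
    intervalIntegral.integral_neg] at h1
  simp only [hp, zero_add] at h1
  linarith

/-- Pruefer angle. -/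
lemma prufer {a u v : ℝ → ℝ} (ha : ∀ x y, IntervalIntegrable a volume x y) (h : Sol a u v)
    (hne : ∀ x, u x ≠ 0 ∨ v x ≠ 0) {ω : ℝ} (hω : 0 < ω) :
    ∃ θ : ℝ → ℝ, ACD θ (fun x => ω + (a x - ω ^ 2) / ω * Real.sin (θ x) ^ 2) ∧
      ∀ x, ω * u x * Real.cos (θ x) = v x * Real.sin (θ x) := by
  set r : ℝ → ℝ := fun x => v x ^ 2 + ω ^ 2 * u x ^ 2 with hr
  have hr0 : ∀ x, 0 < r x := by
    intro x
    rcases hne x with h1 | h1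
    · have : 0 < ω ^ 2 * u x ^ 2 := by positivity
      simp only [hr]; nlinarith [sq_nonneg (v x)]
    · have : 0 < v x ^ 2 := by positivity
      simp only [hr]; nlinarith [mul_nonneg (sq_nonneg ω) (sq_nonneg (u x))]
  have huc := h.u_ac.continuous
  have hvc := h.ac.continuous
  have hrc : Continuous r := by fun_prop
  set q : ℝ → ℝ := fun x => ω + (a x - ω ^ 2) * (ω * u x ^ 2 / r x) with hq
  have had : ∀ x y, IntervalIntegrable (fun t => a t - ω ^ 2) volume x y := fun x y =>
    (ha x y).sub intervalIntegrable_const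
  have hqi : ∀ x y, IntervalIntegrable q volume x y := fun x y =>
    intervalIntegrable_const.add ((had x y).mul_continuousOn
      (Continuous.continuousOn ((by fun_prop : Continuous fun x => ω * u x ^ 2).div₀ hrc
        fun x => (hr0 x).ne')))
  set z : ℂ := ⟨v 0, ω * u 0⟩ with hz
  have hθ := ACD.of_integral z.arg hqi
  set θ : ℝ → ℝ := fun x => z.arg + ∫ t in (0:ℝ)..x, q t with hθdef
  have hθ0 : θ 0 = z.arg := by simp [hθdef]
  have hs1 : ACD (fun x => Real.sin (θ x)) (fun x => Real.cos (θ x) * q x) :=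
    hθ.comp Real.hasDerivAt_sin Real.continuous_cos
  have hc1 : ACD (fun x => Real.cos (θ x)) (fun x => -Real.sin (θ x) * q x) :=
    hθ.comp Real.hasDerivAt_cos (by fun_prop)
  have hs := ((h.u_ac.const_mul ω).mul hc1).sub (h.ac.mul hs1)
  have hss := hs.mul hs
  have hκ : ∀ x y, IntervalIntegrable (fun t => |(a t - ω ^ 2) * (2 * (u t * v t) / r t)|)
      volume x y := fun x y =>
    ((had x y).mul_continuousOn
      (Continuous.continuousOn ((by fun_prop : Continuous fun x => 2 * (u x * v x)).div₀ hrc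
        fun x => (hr0 x).ne'))).abs
  have key := gronwall hss hκ (fun x => mul_self_nonneg _) (by
    refine Filter.Eventually.of_forall fun x => ?_
    have hx := (hr0 x).ne'
    rw [← abs_of_nonneg (mul_self_nonneg (ω * u x * Real.cos (θ x) - v x * Real.sin (θ x))),
      ← abs_mul]
    apply le_of_eq
    rw [← abs_neg]
    congr 1
    simp only [hq]
    field_simp
    simp only [hr]
    ring) (x₀ := 0) (by
      rw [hθ0]
      have h1 : ‖z‖ * Real.cos z.arg = v 0 := Complex.norm_mul_cos_arg z
      have h2 : ‖z‖ * Real.sin z.arg = ω * u 0 := Complex.norm_mul_sin_arg z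
      rw [← h1, ← h2]; ring)
  have key2 : ∀ x, ω * u x * Real.cos (θ x) = v x * Real.sin (θ x) := fun x => by
    have := mul_self_eq_zero.mp (key x)
    linarith
  refine ⟨θ, hθ.congr (Filter.Eventually.of_forall fun x => ?_), key2⟩
  have hx := (hr0 x).ne'
  have h1 : r x * Real.sin (θ x) ^ 2 = ω ^ 2 * u x ^ 2 := by
    have e : (ω * u x * Real.cos (θ x)) ^ 2 = (v x * Real.sin (θ x)) ^ 2 := by rw [key2 x]
    have e2 := Real.sin_sq_add_cos_sq (θ x)
    have e3 : Real.cos (θ x) ^ 2 = 1 - Real.sin (θ x) ^ 2 := by linarith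
    rw [mul_pow, mul_pow, mul_pow, e3] at e
    simp only [hr]
    linarith
  have h2 : Real.sin (θ x) ^ 2 = ω ^ 2 * u x ^ 2 / r x := by
    rw [eq_div_iff hx]; linarith
  simp only [hq, h2]
  field_simp

/-- Truncated `1 / sin ^ 2`. -/
noncomputable def hh (b t : ℝ) : ℝ := 1 / max (Real.sin t ^ 2) b

lemma hh_cont {b : ℝ} (hb : 0 < b) : Continuous (hh b) := by
  unfold hh
  refine continuous_const.div₀ (by fun_prop) fun x => ?_
  exact (lt_of_lt_of_le hb (le_max_right _ _)).ne'

lemma hh_per (b : ℝ) : Function.Periodic (hh b) Real.pi := by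
  intro x
  simp [hh, Real.sin_add_pi]

lemma hh_int {B : ℝ} (h0 : 0 < B) (h1 : B < Real.pi / 2) :
    ∫ t in (0:ℝ)..Real.pi, hh (Real.sin B ^ 2) t
      = 2 * B / Real.sin B ^ 2 + 2 * (Real.cos B / Real.sin B) := by
  have hpi := Real.pi_pos
  have hsB : 0 < Real.sin B := Real.sin_pos_of_pos_of_lt_pi h0 (by linarith)
  have hb : 0 < Real.sin B ^ 2 := by positivity
  have hi : ∀ x y, IntervalIntegrable (hh (Real.sin B ^ 2)) volume x y := fun x y =>
    (hh_cont hb).intervalIntegrable x y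
  rw [← intervalIntegral.integral_add_adjacent_intervals (hi 0 B) (hi B Real.pi),
    ← intervalIntegral.integral_add_adjacent_intervals (hi B (Real.pi - B))
      (hi (Real.pi - B) Real.pi)]
  have e1 : ∫ t in (0:ℝ)..B, hh (Real.sin B ^ 2) t = B / Real.sin B ^ 2 := by
    rw [intervalIntegral.integral_congr (g := fun _ => 1 / Real.sin B ^ 2)]
    · simp; ring
    · intro t ht
      rw [uIcc_of_le h0.le] at ht
      have h2 : Real.sin t ≤ Real.sin B :=
        Real.sin_le_sin_of_le_of_le_pi_div_two (by linarith [ht.1]) h1.le ht.2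
      have h3 : 0 ≤ Real.sin t := Real.sin_nonneg_of_nonneg_of_le_pi ht.1 (by linarith [ht.2])
      simp only [hh]
      rw [max_eq_right (by gcongr)]
  have e3 : ∫ t in (Real.pi - B)..Real.pi, hh (Real.sin B ^ 2) t = B / Real.sin B ^ 2 := by
    rw [intervalIntegral.integral_congr (g := fun _ => 1 / Real.sin B ^ 2)]
    · simp; ring
    · intro t ht
      rw [uIcc_of_le (by linarith)] at ht
      have h2 : Real.sin (Real.pi - t) ≤ Real.sin B :=
        Real.sin_le_sin_of_le_of_le_pi_div_two (by linarith [ht.2]) h1.le (by linarith [ht.1])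
      rw [Real.sin_pi_sub] at h2
      have h3 : 0 ≤ Real.sin t :=
        Real.sin_nonneg_of_nonneg_of_le_pi (by linarith [ht.1]) ht.2
      simp only [hh]
      rw [max_eq_right (by gcongr)]
  have hsin : ∀ t ∈ uIcc B (Real.pi - B), Real.sin B ≤ Real.sin t := by
    intro t ht
    rw [uIcc_of_le (by linarith)] at ht
    rcases le_total t (Real.pi / 2) with h | h
    · exact Real.sin_le_sin_of_le_of_le_pi_div_two (by linarith) h ht.1
    · rw [← Real.sin_pi_sub t]
      exact Real.sin_le_sin_of_le_of_le_pi_div_two (by linarith) (by linarith)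
        (by linarith [ht.2])
  have e2 : ∫ t in B..(Real.pi - B), hh (Real.sin B ^ 2) t = 2 * (Real.cos B / Real.sin B) := by
    have hd : ∀ t ∈ uIcc B (Real.pi - B), HasDerivAt (fun t => -(Real.cos t / Real.sin t))
        (hh (Real.sin B ^ 2) t) t := by
      intro t ht
      have h2 := hsin t ht
      have h3 : Real.sin t ≠ 0 := by linarith
      have h4 := ((Real.hasDerivAt_cos t).div (Real.hasDerivAt_sin t) h3).neg
      refine h4.congr_deriv ?_
      simp only [hh]
      rw [max_eq_left (by gcongr)]
      have := Real.sin_sq_add_cos_sq t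
      field_simp
      linarith
    rw [intervalIntegral.integral_eq_sub_of_hasDerivAt hd (hi _ _)]
    rw [Real.cos_pi_sub, Real.sin_pi_sub]
    ring
  rw [e1, e2, e3]; ring

lemma exists_half (c : ℝ) : ∃ t ∈ Icc c (c + Real.pi), Real.sin t ^ 2 = 1 := by
  have hpi := Real.pi_pos
  refine ⟨Real.pi / 2 + ⌈(c - Real.pi / 2) / Real.pi⌉ * Real.pi, ⟨?_, ?_⟩, ?_⟩
  · have := Int.le_ceil ((c - Real.pi / 2) / Real.pi)
    rw [div_le_iff₀ hpi] at this
    linarith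
  · have := (Int.ceil_lt_add_one ((c - Real.pi / 2) / Real.pi)).le
    have h2 := mul_le_mul_of_nonneg_right this hpi.le
    rw [add_mul, div_mul_cancel₀ _ hpi.ne'] at h2
    linarith
  · have : Real.cos (Real.pi / 2 + ⌈(c - Real.pi / 2) / Real.pi⌉ * Real.pi) = 0 := by
      rw [Real.cos_eq_zero_iff]
      exact ⟨⌈(c - Real.pi / 2) / Real.pi⌉, by ring⟩
    have h2 := Real.sin_sq_add_cos_sq (Real.pi / 2 + ⌈(c - Real.pi / 2) / Real.pi⌉ * Real.pi)
    rw [this] at h2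
    linarith

lemma core {a u v : ℝ → ℝ} (ha : ∀ x y, IntervalIntegrable a volume x y) (h : Sol a u v)
    (hne : ∀ x, u x ≠ 0 ∨ v x ≠ 0) {ω T l : ℝ} (hω : 0 < ω) (hT : 0 < T) {p : ℕ}
    (hp1 : p * Real.pi ≤ ω * T) (hp2 : ω * T ≤ (p + 1) * Real.pi)
    (hka : ∀ᵐ x : ℝ, ω ^ 2 ≤ a x)
    (hnorm : ∫ x in (0:ℝ)..T, a x ≤
      ω ^ 2 * T + 2 * ((p : ℝ) + 1) * ω * Real.cot (ω * T / (2 * ((p : ℝ) + 1))))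
    (hu : u T = l * u 0) (hv : v T = l * v 0) :
    ∀ᵐ x ∂(volume.restrict (Ioc 0 T)), a x = ω ^ 2 := by
  have hpi := Real.pi_pos
  have had : ∀ x y, IntervalIntegrable (fun t => a t - ω ^ 2) volume x y := fun x y =>
    (ha x y).sub intervalIntegrable_const
  have hadI : ∫ x in (0:ℝ)..T, (a x - ω ^ 2) = (∫ x in (0:ℝ)..T, a x) - ω ^ 2 * T := by
    rw [intervalIntegral.integral_sub (ha 0 T) intervalIntegrable_const]
    simp; ring
  set B : ℝ := ω * T / (2 * ((p : ℝ) + 1)) with hB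
  have hp0 : (0:ℝ) < p + 1 := by positivity
  have hB0 : 0 < B := by positivity
  have hBT : ω * T = 2 * (p + 1) * B := by rw [hB]; field_simp
  have hB2 : B ≤ Real.pi / 2 := by
    rw [hBT] at hp2
    nlinarith
  obtain ⟨θ, hθ, hθr⟩ := prufer ha h hne hω
  have hθc := hθ.continuous
  -- the total rotation is a multiple of `π`
  obtain ⟨n, hn⟩ : ∃ n : ℤ, (n : ℝ) * Real.pi = θ T - θ 0 := by
    rw [← Real.sin_eq_zero_iff, Real.sin_sub]
    have e0 := hθr 0
    have e1 := hθr T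
    have hl : l ≠ 0 := by
      rintro rfl
      rcases hne T with h1 | h1
      · exact h1 (by simp [hu])
      · exact h1 (by simp [hv])
    rw [hu, hv] at e1
    have e2 : ω * u 0 * Real.cos (θ T) = v 0 * Real.sin (θ T) := by
      apply mul_left_cancel₀ hl; linarith
    rcases hne 0 with h1 | h1
    · have h2 : ω * u 0 ≠ 0 := by positivity
      apply mul_left_cancel₀ h2
      linear_combination (-Real.sin (θ 0)) * e2 + Real.sin (θ T) * e0
    · apply mul_left_cancel₀ h1
      linear_combination (-Real.cos (θ 0)) * e2 + Real.cos (θ T) * e0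
  have hint := hθ.integral 0 T
  rw [← hn] at hint
  set φ : ℝ → ℝ := fun x => θ x - ω * x with hφ
  have hφd : ACD φ (fun x => (a x - ω ^ 2) / ω * Real.sin (θ x) ^ 2) := by
    refine (hθ.sub (ACD.of_C1 (f := fun x => ω * x) (f' := fun _ => ω)
      (fun x => by simpa using (hasDerivAt_id x).const_mul ω) continuous_const)).congr
      (Filter.Eventually.of_forall fun x => ?_)
    ring
  have hφn : ∀ᵐ x : ℝ, 0 ≤ (a x - ω ^ 2) / ω * Real.sin (θ x) ^ 2 := by
    filter_upwards [hka] with x hx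
    have : 0 ≤ a x - ω ^ 2 := by linarith
    positivity
  have hφm : Monotone φ := by
    intro x y hxy
    have h1 := hφd.integral x y
    have h2 : 0 ≤ ∫ t in x..y, (a t - ω ^ 2) / ω * Real.sin (θ t) ^ 2 :=
      intervalIntegral.integral_nonneg_of_ae hxy hφn
    linarith
  have hnp : (p : ℤ) ≤ n := by
    have h1 := hφm hT.le
    simp only [hφ] at h1
    have h2 : (p : ℝ) * Real.pi ≤ n * Real.pi := by linarith
    exact_mod_cast le_of_mul_le_mul_right h2 hpi
  rcases hnp.eq_or_lt with hnp | hnp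
  · -- rotation exactly `p π`
    have h0 : φ T = φ 0 := by
      apply le_antisymm _ (hφm hT.le)
      simp only [hφ]
      rw [← hnp] at hn
      push_cast at hn
      linarith
    have hIcc : ∀ x ∈ Icc 0 T, θ x = θ 0 + ω * x := by
      intro x hx
      have h1 := hφm hx.1
      have h2 := hφm hx.2
      have h3 : φ x = φ 0 := le_antisymm (by linarith) h1
      simp only [hφ] at h3
      linarith
    have h1 := hφd.integral 0 T
    rw [h0, sub_self, intervalIntegral.integral_eq_zero_iff_of_le_of_nonneg_ae hT.le
      (ae_restrict_of_ae hφn) (hφd.intervalIntegrable 0 T)] at h1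
    have hcount : ∀ᵐ x : ℝ, Real.sin (θ 0 + ω * x) ≠ 0 := by
      rw [ae_iff]
      refine Set.Countable.measure_zero ?_ _
      refine (countable_range (fun m : ℤ => ((m : ℝ) * Real.pi - θ 0) / ω)).mono ?_
      intro x hx
      simp only [ne_eq, not_not, mem_ofPred_eq] at hx
      rw [Real.sin_eq_zero_iff] at hx
      obtain ⟨m, hm⟩ := hx
      refine ⟨m, ?_⟩
      simp only [hm]
      field_simp
      ring
    filter_upwards [h1, ae_restrict_of_ae hcount, ae_restrict_mem measurableSet_Ioc]
      with x h2 h3 h4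
    rw [hIcc x (Ioc_subset_Icc_self h4)] at h2
    simp only [Pi.zero_apply, mul_eq_zero, div_eq_zero_iff, pow_eq_zero_iff, ne_eq,
      OfNat.ofNat_ne_zero, not_false_eq_true] at h2
    rcases h2 with (h2 | h2) | h2
    · linarith
    · exact absurd h2 hω.ne'
    · exact absurd h2 h3
  · rcases hB2.eq_or_lt with hB2 | hB2
    · -- endpoint case
      rw [hB2, Real.cot_eq_cos_div_sin, Real.cos_pi_div_two] at hnorm
      have hn0 : 0 ≤ᵐ[volume.restrict (Ioc 0 T)] fun x => a x - ω ^ 2 := by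
        refine ae_restrict_of_ae ?_
        filter_upwards [hka] with x hx
        simp only [Pi.zero_apply]; linarith
      have h1 : ∫ x in (0:ℝ)..T, (a x - ω ^ 2) = 0 := by
        apply le_antisymm
        · rw [hadI]; simp at hnorm; linarith
        · rw [intervalIntegral.integral_of_le hT.le]
          exact integral_nonneg_of_ae hn0
      rw [intervalIntegral.integral_eq_zero_iff_of_le_of_nonneg_ae hT.le hn0 (had 0 T)] at h1
      filter_upwards [h1] with x hx
      simp only [Pi.zero_apply] at hx
      linarith
    · -- contradiction
      exfalso
      have hsB : 0 < Real.sin B := Real.sin_pos_of_pos_of_lt_pi hB0 (by linarith)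
      have hcB : 0 < Real.cos B := Real.cos_pos_of_mem_Ioo ⟨by linarith, hB2⟩
      set b : ℝ := Real.sin B ^ 2 with hb
      have hb0 : 0 < b := by positivity
      have hb1 : b < 1 := by nlinarith [Real.sin_sq_add_cos_sq B]
      have hhc := hh_cont hb0
      set H : ℝ → ℝ := fun x => ∫ t in (0:ℝ)..x, hh b t with hH
      have hHd : ∀ x, HasDerivAt H (hh b x) x := fun x =>
        intervalIntegral.integral_hasDerivAt_right (hhc.intervalIntegrable _ _)
          (hhc.stronglyMeasurableAtFilter _ _) hhc.continuousAt
      have hcomp := hθ.comp hHd hhc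
      have i1 := hcomp.integral 0 T
      have i2 : H (θ T) - H (θ 0) = n * (2 * B / b + 2 * (Real.cos B / Real.sin B)) := by
        simp only [hH]
        rw [intervalIntegral.integral_interval_sub_left (hhc.intervalIntegrable _ _)
          (hhc.intervalIntegrable _ _)]
        have e : θ T = θ 0 + n • Real.pi := by rw [zsmul_eq_mul]; linarith
        rw [e, (hh_per b).intervalIntegral_add_zsmul_eq n (θ 0)
          (fun x y => hhc.intervalIntegrable x y), zsmul_eq_mul,
          (hh_per b).intervalIntegral_add_eq (θ 0) 0, zero_add, hh_int hB0 hB2]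
      have hhθ : Continuous fun x => hh b (θ x) := hhc.comp hθc
      -- pointwise inequality
      have i3 : ∫ x in (0:ℝ)..T, ω * (hh b (θ x) * (ω + (a x - ω ^ 2) / ω * Real.sin (θ x) ^ 2))
          ≤ ∫ x in (0:ℝ)..T, ((a x - ω ^ 2) + ω ^ 2 * hh b (θ x)) := by
        apply intervalIntegral.integral_mono_ae hT.le
          ((hcomp.intervalIntegrable 0 T).const_mul ω)
          ((had 0 T).add ((by fun_prop : Continuous fun x => ω ^ 2 * hh b (θ x)).intervalIntegrable
            0 T))
        filter_upwards [hka] with x hx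
        have hd0 : 0 ≤ a x - ω ^ 2 := by linarith
        have hs : hh b (θ x) * Real.sin (θ x) ^ 2 ≤ 1 := by
          unfold hh
          rw [div_mul_eq_mul_div, one_mul]
          exact div_le_one_of_le₀ (le_max_left _ _) (hb0.le.trans (le_max_right _ _))
        have e : ω * (hh b (θ x) * (ω + (a x - ω ^ 2) / ω * Real.sin (θ x) ^ 2))
          = ω ^ 2 * hh b (θ x) + (a x - ω ^ 2) * (hh b (θ x) * Real.sin (θ x) ^ 2) := by
          field_simp
        rw [e]
        nlinarith
      rw [intervalIntegral.integral_const_mul, i1, i2, intervalIntegral.integral_add (had 0 T)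
        ((by fun_prop : Continuous fun x => ω ^ 2 * hh b (θ x)).intervalIntegrable 0 T),
        intervalIntegral.integral_const_mul, hadI] at i3
      -- strictness
      have hn1 : (p : ℝ) + 1 ≤ n := by exact_mod_cast hnp
      have i4 : 0 < ∫ x in (0:ℝ)..T, (1 / b - hh b (θ x)) := by
        obtain ⟨t, ht, hts⟩ := exists_half (θ 0)
        have h1 : θ 0 + Real.pi ≤ θ T := by
          have : Real.pi ≤ n * Real.pi := by
            have : (1:ℝ) ≤ n := by
              have : (0:ℝ) ≤ p := by positivity
              linarith
            nlinarith
          linarith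
        obtain ⟨x, hx, hxt⟩ := intermediate_value_Icc hT.le hθc.continuousOn
          ⟨ht.1, ht.2.trans h1⟩
        apply intervalIntegral.integral_pos hT (by fun_prop)
        · intro y _
          unfold hh
          have := one_div_le_one_div_of_le hb0 (le_max_right (Real.sin (θ y) ^ 2) b)
          linarith
        · refine ⟨x, hx, ?_⟩
          unfold hh
          rw [hxt, hts, max_eq_left hb1.le]
          have := one_div_lt_one_div_of_lt hb0 hb1
          linarith
      rw [intervalIntegral.integral_sub intervalIntegrable_const
        (hhθ.intervalIntegrable 0 T)] at i4
      simp only [intervalIntegral.integral_const, sub_zero, smul_eq_mul] at i4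
      rw [Real.cot_eq_cos_div_sin] at hnorm
      have hC0 : 0 < Real.cos B / Real.sin B := by positivity
      set C := Real.cos B / Real.sin B
      set J := ∫ x in (0:ℝ)..T, hh b (θ x)
      have f1 : ω ^ 2 * J < ω ^ 2 * (T * (1 / b)) := by
        apply mul_lt_mul_of_pos_left (by linarith) (by positivity)
      have f2 : ω ^ 2 * (T * (1 / b)) = ω * ((p + 1) * (2 * B / b)) := by
        have : ω ^ 2 * (T * (1 / b)) = ω * ((ω * T) * (1 / b)) := by ring
        rw [this, hBT]; ring
      have f3 : ω * ((p + 1) * (2 * B / b + 2 * C)) ≤ ω * (n * (2 * B / b + 2 * C)) := by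
        apply mul_le_mul_of_nonneg_left _ hω.le
        apply mul_le_mul_of_nonneg_right hn1 (by positivity)
      have f4 : ω * ((p + 1) * (2 * B / b + 2 * C))
          = ω * ((p + 1) * (2 * B / b)) + 2 * (p + 1) * ω * C := by ring
      linarith

lemma ae_extend {a : ℝ → ℝ} {T k : ℝ} (hT : 0 < T) (hp : ∀ x, a (x + T) = a x)
    (h : ∀ᵐ x ∂(volume.restrict (Ioc 0 T)), a x = k) : ∀ᵐ x : ℝ, a x = k := by
  rw [ae_restrict_iff' measurableSet_Ioc] at h
  have hper : Function.Periodic a T := hp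
  have h2 : ∀ n : ℤ, ∀ᵐ x : ℝ, x + n * T ∈ Ioc 0 T → a (x + n * T) = k := by
    intro n
    exact (measurePreserving_add_right volume ((n : ℝ) * T)).quasiMeasurePreserving.ae h
  rw [← ae_all_iff] at h2
  filter_upwards [h2] with x hx
  obtain ⟨n, hn, -⟩ := existsUnique_add_zsmul_mem_Ioc hT x 0
  rw [zsmul_eq_mul, zero_add] at hn
  rw [← hx n hn]
  have := hper.int_mul n x
  exact this.symm

lemma abs_le_sq (x : ℝ) : |x| ≤ x ^ 2 + 1 := by
  rw [abs_le]; constructor <;> nlinarith [sq_nonneg (x - 1), sq_nonneg (x + 1)]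

lemma const_case {a u v : ℝ → ℝ} (h : Sol a u v) {ω : ℝ} (hω : 0 < ω)
    (hk : ∀ᵐ x : ℝ, a x = ω ^ 2) : ∃ C : ℝ, ∀ x : ℝ, |u x| + |v x| ≤ C := by
  have hE := (h.ac.mul h.ac).add ((h.u_ac.mul h.u_ac).const_mul (ω ^ 2))
  have hE0 : ∀ x, v x * v x + ω ^ 2 * (u x * u x) = v 0 * v 0 + ω ^ 2 * (u 0 * u 0) := by
    intro x
    have h1 := hE.integral 0 x
    rw [intervalIntegral.integral_congr_ae (g := fun _ => 0)] at h1
    · simp at h1; linarith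
    · filter_upwards [hk] with t ht _
      rw [ht]; ring
  set E := v 0 * v 0 + ω ^ 2 * (u 0 * u 0)
  refine ⟨E / ω ^ 2 + 1 + (E + 1), fun x => ?_⟩
  have h1 := hE0 x
  have h2 : u x ^ 2 ≤ E / ω ^ 2 := by
    rw [le_div_iff₀ (by positivity)]
    nlinarith [mul_self_nonneg (v x)]
  have h3 : v x ^ 2 ≤ E := by nlinarith [mul_nonneg (sq_nonneg ω) (mul_self_nonneg (u x))]
  linarith [abs_le_sq (u x), abs_le_sq (v x)]

lemma bdd_rec {f : ℝ → ℝ} (hf : Continuous f) {T β : ℝ} (hT : 0 < T) (hβ : β ^ 2 < 4)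
    (hr : ∀ x, f (x + T + T) = β * f (x + T) - f x) : ∃ C : ℝ, ∀ x, |f x| ≤ C := by
  set Q : ℝ → ℝ := fun x => f x ^ 2 - β * (f x * f (x + T)) + f (x + T) ^ 2 with hQ
  have hQc : Continuous Q := by fun_prop
  have hQp : Function.Periodic Q T := by
    intro x
    simp only [hQ, hr]; ring
  obtain ⟨C, hC⟩ := (hQp.isBounded_of_continuous hT.ne' hQc).exists_norm_le
  refine ⟨C / (1 - β ^ 2 / 4) + 1, fun x => ?_⟩
  have h1 : Q x ≤ C := (le_abs_self _).trans (hC _ ⟨x, rfl⟩)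
  have h2 : f x ^ 2 ≤ C / (1 - β ^ 2 / 4) := by
    rw [le_div_iff₀ (by linarith)]
    simp only [hQ] at h1
    nlinarith [sq_nonneg (f (x + T) - β / 2 * f x)]
  linarith [abs_le_sq (f x)]

lemma wronskian {a u v y w : ℝ → ℝ} (h : Sol a u v) (h' : Sol a y w) (x x' : ℝ) :
    u x * w x - y x * v x = u x' * w x' - y x' * v x' := by
  have hW := (h.u_ac.mul h'.ac).sub (h'.u_ac.mul h.ac)
  have h1 := hW.integral x' x
  rw [intervalIntegral.integral_congr_ae (g := fun _ => 0)] at h1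
  · simp at h1; linarith
  · refine Filter.Eventually.of_forall fun t _ => ?_
    ring

lemma floquet {a u v : ℝ → ℝ} (ha : ∀ x y, IntervalIntegrable a volume x y)
    {T : ℝ} (hT : 0 < T) (hp : ∀ x, a (x + T) = a x)
    (hno : ∀ y w : ℝ → ℝ, Sol a y w → (∀ x, y x ≠ 0 ∨ w x ≠ 0) → ∀ l : ℝ,
      y T = l * y 0 → w T = l * w 0 → False)
    (h : Sol a u v) : ∃ C : ℝ, ∀ x : ℝ, |u x| + |v x| ≤ C := by
  have hnz : ∀ y w : ℝ → ℝ, Sol a y w → ¬ (y 0 = 0 ∧ w 0 = 0) → ∀ x, y x ≠ 0 ∨ w x ≠ 0 := by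
    intro y w hs hn x
    by_contra hx
    push Not at hx
    exact hn (hs.unique ha hx.1 hx.2 0)
  by_cases h0 : u 0 = 0 ∧ v 0 = 0
  · refine ⟨0, fun x => ?_⟩
    have := h.unique ha h0.1 h0.2 x
    simp [this.1, this.2]
  have h1 := h.shift ha hp
  have h2 := h1.shift ha hp
  set W := u 0 * v T - u T * v 0 with hW
  have hW0 : W ≠ 0 := by
    intro hW'
    by_cases hu0 : u 0 = 0
    · have hv0 : v 0 ≠ 0 := fun hv0 => h0 ⟨hu0, hv0⟩
      refine hno u v h (hnz u v h h0) (v T / v 0) ?_ ?_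
      · rw [hu0, mul_zero]
        rw [hW, hu0] at hW'
        have : u T * v 0 = 0 := by linarith
        exact (mul_eq_zero.mp this).resolve_right hv0
      · field_simp
    · refine hno u v h (hnz u v h h0) (u T / u 0) ?_ ?_
      · field_simp
      · field_simp
        linarith
  have hWT := wronskian h h1 T 0
  simp only [zero_add] at hWT
  set β := (u 0 * v (T + T) - u (T + T) * v 0) / W with hβ
  have hβW : β * W = u 0 * v (T + T) - u (T + T) * v 0 := by rw [hβ]; field_simp
  have hu2 : u (T + T) = β * u T - u 0 := by
    apply mul_left_cancel₀ hW0
    rw [hW] at hβW ⊢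
    linear_combination (-u T) * hβW - u 0 * hWT
  have hv2 : v (T + T) = β * v T - v 0 := by
    apply mul_left_cancel₀ hW0
    rw [hW] at hβW ⊢
    linear_combination (-v T) * hβW - v 0 * hWT
  have hrec : ∀ x, u (x + T + T) = β * u (x + T) - u x ∧ v (x + T + T) = β * v (x + T) - v x := by
    intro x
    have hs := (h2.comb h1 1 (-β)).comb h 1 1
    have := hs.unique ha (x₀ := 0) (by simp only [zero_add]; linarith)
      (by simp only [zero_add]; linarith) x
    constructor
    · linarith [this.1]
    · linarith [this.2]
  rcases lt_or_ge (β ^ 2) 4 with hb | hb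
  · obtain ⟨C1, hC1⟩ := bdd_rec h.u_ac.continuous hT hb (fun x => (hrec x).1)
    obtain ⟨C2, hC2⟩ := bdd_rec h.ac.continuous hT hb (fun x => (hrec x).2)
    exact ⟨C1 + C2, fun x => add_le_add (hC1 x) (hC2 x)⟩
  · exfalso
    set s := Real.sqrt (β ^ 2 - 4) with hs
    have hs2 : s ^ 2 = β ^ 2 - 4 := Real.sq_sqrt (by linarith)
    have hy := h1.comb h 1 (-((β - s) / 2))
    refine hno _ _ hy (hnz _ _ hy ?_) ((β + s) / 2) ?_ ?_
    · simp only [zero_add]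
      rintro ⟨e1, e2⟩
      apply hW0
      rw [hW]
      linear_combination u 0 * e2 - v 0 * e1
    · simp only [zero_add]
      rw [hu2]
      linear_combination (-u 0 / 4) * hs2
    · simp only [zero_add]
      rw [hv2]
      linear_combination (-v 0 / 4) * hs2

end HillAux

theorem stmt12 (T : ℝ) (hT : 0 < T) (a : ℝ → ℝ) (hLT : MemLT T a)
    (p : ℕ) (hp : 1 ≤ p) (k : ℝ)
    (hk : k ∈ Set.Icc ((p : ℝ) ^ 2 * Real.pi ^ 2 / T ^ 2)
      (((p : ℝ) + 1) ^ 2 * Real.pi ^ 2 / T ^ 2))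
    (hka : ∀ᵐ x : ℝ, k ≤ a x)
    (hnorm : (∫ x in (0:ℝ)..T, |a x|) ≤
      k * T + 2 * ((p : ℝ) + 1) * Real.sqrt k *
        Real.cot (Real.sqrt k * T / (2 * ((p : ℝ) + 1)))) :
    ∀ u v : ℝ → ℝ, (∀ x : ℝ, HasDerivAt u (v x) x) →
      (∀ x : ℝ, v x = v 0 - ∫ t in (0:ℝ)..x, a t * u t) →
      ∃ C : ℝ, ∀ x : ℝ, |u x| + |v x| ≤ C := by
  intro u v hu hv
  obtain ⟨-, hper, hint⟩ := hLT
  have hpi := Real.pi_pos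
  have hp0 : (0:ℝ) < p := by exact_mod_cast hp
  have hk0 : 0 < k := lt_of_lt_of_le (by positivity) hk.1
  have ha : ∀ x y, IntervalIntegrable a volume x y := fun x y =>
    Function.Periodic.intervalIntegrable₀ (T := T) hper hT.ne'
      ((intervalIntegrable_iff_integrableOn_Icc_of_le hT.le).mpr hint) x y
  have hsol := HillAux.Sol.of_integral ha hu (v 0) hv
  set ω := Real.sqrt k with hω
  have hω0 : 0 < ω := Real.sqrt_pos.mpr hk0
  have hωk : ω ^ 2 = k := Real.sq_sqrt hk0.le
  have hp1 : p * Real.pi ≤ ω * T := by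
    apply le_of_sq_le_sq _ (by positivity)
    have := hk.1
    rw [div_le_iff₀ (by positivity)] at this
    rw [mul_pow, mul_pow, hωk]; exact this
  have hp2 : ω * T ≤ (p + 1) * Real.pi := by
    apply le_of_sq_le_sq _ (by positivity)
    have := hk.2
    rw [le_div_iff₀ (by positivity)] at this
    rw [mul_pow, mul_pow, hωk]; exact this
  have habs : ∫ x in (0:ℝ)..T, |a x| = ∫ x in (0:ℝ)..T, a x := by
    apply intervalIntegral.integral_congr_ae
    filter_upwards [hka] with x hx _
    exact abs_of_nonneg (hk0.le.trans hx)
  rw [habs, ← hωk] at hnorm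
  rw [← hωk] at hka
  by_cases hc : ∀ᵐ x : ℝ, a x = ω ^ 2
  · exact HillAux.const_case hsol hω0 hc
  · refine HillAux.floquet ha hT hper ?_ hsol
    intro y w hs hne l h1 h2
    exact hc (HillAux.ae_extend hT hper
      (HillAux.core ha hs hne hω0 hT hp1 hp2 hka hnorm h1 h2))
end
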